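/- The set of pairs of integers (n,m) with n ≥ 2, m ≥ 2 and F_n - T_m = -5 is exactly {(3,5), (6,6), (12,10)}; that is, -5 = 2 - 7 = 8 - 13 = 144 - 149 are the only representations of -5 as a difference of a Fibonacci and a Tribonacci number with indices at least 2. -/

import Mathlib

/-- The Tribonacci sequence: T 0 = 0, T 1 = T 2 = 1,
    T (k+3) = T (k+2) + T (k+1) + T k. -/
def trib : ℕ → ℤ
  | 0 => 0
  | 1 => 1
  | 2 => 1
  | n + 3 => trib (n + 2) + trib (n + 1) + trib n

/-!
A sieve with the periods of both sequences modulo suitable `q` shows that the indices of a solution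
are congruent, modulo an `N` of size about `2 * 10 ^ 18`, to those of one of the fourteen solutions
`(n₀, m₀)` of `F n + 5 = T m` in all integers, for the sequences continued to negative indices.

If `(n, m) = (n₀ + N a, m₀ + N b)` with `(a, b) ≠ 0`, then Binet's formulas put the algebraic number
`γ = φ ^ n₀ * α ^ (-(m₀ + 1)) * (3 * α ^ 2 - 2 * α - 1) / √5` exponentially close to `x ^ N` for the
unit `x = φ ^ (-a) * α ^ b`, where `α` is the real root of `X ^ 3 - X ^ 2 - X - 1`. As in the proof
of Baker's theorem, this is refuted by an auxiliary function
`∑ p_ij * (r + s N).choose i * (x ^ r * γ ^ s) ^ j`. Since `x ^ r * γ ^ s` is nearly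
`x ^ (r + s N)`, it is close to a function of the single variable `r + s N`, so Siegel's lemma and a
truncated exponential series make its values tiny for suitable integers `p_ij`. They are algebraic
numbers, hence zero by Liouville's inequality, contradicting a Vandermonde-type zero estimate.
-/

section ZeroEstimate

open Polynomial

variable {R : Type*} [CommRing R]

theorem coeff_prod_sum_of_natDegree_le {ι : Type*} (s : Finset ι) (f : ι → R[X]) (d : ι → ℕ)
    (h : ∀ i ∈ s, (f i).natDegree ≤ d i) :
    (∏ i ∈ s, f i).coeff (∑ i ∈ s, d i) = ∏ i ∈ s, (f i).coeff (d i) := by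
  classical
  induction s using Finset.induction_on with
  | empty => simp
  | insert i s hi ih =>
    rw [Finset.forall_mem_insert] at h
    have hs : (∏ j ∈ s, f j).natDegree ≤ ∑ j ∈ s, d j :=
      (natDegree_prod_le s f).trans (Finset.sum_le_sum h.2)
    rw [Finset.prod_insert hi, Finset.sum_insert hi, Finset.prod_insert hi,
      coeff_mul_add_eq_of_natDegree_le h.1 hs, ih h.2]

section Det

variable {n : Type*} [Fintype n] [DecidableEq n] {M : Matrix n n R[X]} {d : n → ℕ}

theorem natDegree_det_le_sum (h : ∀ i j, (M i j).natDegree ≤ d i) :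
    M.det.natDegree ≤ ∑ i, d i := by
  rw [Matrix.det_apply]
  refine natDegree_sum_le_of_forall_le _ _ fun σ _ => (natDegree_smul_le _ _).trans ?_
  rw [← Equiv.sum_comp σ]
  exact (natDegree_prod_le _ _).trans (Finset.sum_le_sum fun i _ => h (σ i) i)

theorem coeff_det_sum (h : ∀ i j, (M i j).natDegree ≤ d i) :
    M.det.coeff (∑ i, d i) = (Matrix.of fun i j => (M i j).coeff (d i)).det := by
  rw [Matrix.det_apply, Matrix.det_apply, finsetSum_coeff]
  refine Finset.sum_congr rfl fun σ _ => ?_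
  rw [coeff_smul, ← Equiv.sum_comp σ,
    coeff_prod_sum_of_natDegree_le _ _ (fun i => d (σ i)) fun i _ => h (σ i) i]
  rfl

end Det

/-- A Vandermonde matrix with row factors `Q i` evaluated at consecutive points: its value at `z`
is the matrix of the numbers `v i ^ ρ * (Q i).eval (z + ρ)`. -/
noncomputable def shiftedVandermonde {m : ℕ} (v : Fin m → R) (Q : Fin m → R[X]) :
    Matrix (Fin m) (Fin m) R[X] :=
  Matrix.of fun i ρ => C (v i ^ (ρ : ℕ)) * taylor (ρ : R) (Q i)

section ShiftedVandermonde

variable {m : ℕ} (v : Fin m → R) (Q : Fin m → R[X])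

theorem natDegree_shiftedVandermonde_le (i ρ : Fin m) :
    (shiftedVandermonde v Q i ρ).natDegree ≤ (Q i).natDegree :=
  (natDegree_C_mul_le _ _).trans (natDegree_taylor _ _).le

theorem coeff_det_shiftedVandermonde :
    (shiftedVandermonde v Q).det.coeff (∑ i, (Q i).natDegree) =
      (∏ i, (Q i).leadingCoeff) * (Matrix.vandermonde v).det := by
  rw [coeff_det_sum (natDegree_shiftedVandermonde_le v Q), ← Matrix.det_mul_column]
  congr 1
  ext i ρ
  rw [shiftedVandermonde, Matrix.of_apply, Matrix.of_apply, Matrix.of_apply, coeff_C_mul,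
    coeff_taylor_natDegree, Matrix.vandermonde_apply, mul_comm]

theorem det_shiftedVandermonde_ne_zero [IsDomain R] (hv : Function.Injective v)
    (hQ : ∀ i, Q i ≠ 0) : (shiftedVandermonde v Q).det ≠ 0 := by
  intro h
  have hcoeff := coeff_det_shiftedVandermonde v Q
  rw [h, coeff_zero] at hcoeff
  exact mul_ne_zero (Finset.prod_ne_zero_iff.2 fun i _ => leadingCoeff_ne_zero.2 (hQ i))
    (Matrix.det_vandermonde_ne_zero_iff.2 hv) hcoeff.symm

end ShiftedVandermonde

variable [IsDomain R]

theorem card_le_sum_natDegree_of_forall_ne_zero {m : ℕ} (hm : m ≠ 0) {v : Fin m → R}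
    (hv : Function.Injective v) {Q : Fin m → R[X]} (hQ : ∀ i, Q i ≠ 0) {Z : Finset R}
    (h : ∀ z ∈ Z, ∃ c : Fin m → R, (∀ i, c i ≠ 0) ∧
      ∀ ρ < m, ∑ i, c i * (v i ^ ρ * (Q i).eval (z + ρ)) = 0) :
    Z.card ≤ ∑ i, (Q i).natDegree := by
  by_contra! hcard
  have : NeZero m := ⟨hm⟩
  refine det_shiftedVandermonde_ne_zero v Q hv hQ
    (eq_zero_of_natDegree_lt_card_of_eval_eq_zero' _ Z (fun z hz => ?_)
      ((natDegree_det_le_sum (natDegree_shiftedVandermonde_le v Q)).trans_lt hcard))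
  rw [← coe_evalRingHom, RingHom.map_det, ← Matrix.exists_vecMul_eq_zero_iff]
  obtain ⟨c, hc, hsum⟩ := h z hz
  refine ⟨c, fun h0 => hc 0 (congrFun h0 0), funext fun ρ => ?_⟩
  simpa [Matrix.vecMul, dotProduct, shiftedVandermonde, taylor_eval] using hsum ρ ρ.2

theorem card_le_sum_natDegree {ι : Type*} [Fintype ι] {v : ι → R} (hv : Function.Injective v)
    {Q : ι → R[X]} (hQ : Q ≠ 0) {Z : Finset R}
    (h : ∀ z ∈ Z, ∃ c : ι → R, (∀ i, c i ≠ 0) ∧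
      ∀ ρ < Fintype.card ι, ∑ i, c i * (v i ^ ρ * (Q i).eval (z + ρ)) = 0) :
    Z.card ≤ ∑ i, (Q i).natDegree := by
  classical
  obtain ⟨i₀, hi₀⟩ := Function.ne_iff.1 hQ
  have : Nonempty {i // Q i ≠ 0} := ⟨⟨i₀, hi₀⟩⟩
  let equiv := Fintype.equivFin {i // Q i ≠ 0}
  let e (j : Fin (Fintype.card {i // Q i ≠ 0})) : ι := equiv.symm j
  have he : Function.Injective e := Subtype.val_injective.comp equiv.symm.injective
  have eq_zero_of_notMem_range (i : ι) (hi : i ∉ Set.range e) : Q i = 0 := by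
    by_contra hne
    exact hi ⟨equiv ⟨i, hne⟩, by simp [e]⟩
  rw [← Fintype.sum_of_injective e he (fun j => (Q (e j)).natDegree) _
    (fun i hi => by simp [eq_zero_of_notMem_range i hi]) fun _ => rfl]
  refine card_le_sum_natDegree_of_forall_ne_zero Fintype.card_ne_zero (hv.comp he)
    (fun j => (equiv.symm j).2) fun z hz => ?_
  obtain ⟨c, hc, hsum⟩ := h z hz
  refine ⟨fun j => c (e j), fun j => hc _, fun ρ hρ => ?_⟩
  rw [← hsum ρ (hρ.trans_le (Fintype.card_subtype_le _))]
  exact Fintype.sum_of_injective e he _ _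
    (fun i hi => by simp [eq_zero_of_notMem_range i hi]) fun _ => rfl

end ZeroEstimate

section CoeffNorm

open Polynomial

variable {𝕜 : Type*} [NormedField 𝕜]

/-- The sum of the norms of the coefficients of a polynomial, weighted by the powers of `ρ`. It
bounds the polynomial on the ball of radius `ρ`. -/
noncomputable def coeffNorm (ρ : ℝ) (p : 𝕜[X]) : ℝ :=
  p.sum fun n a => ‖a‖ * ρ ^ n

variable {ρ : ℝ}

theorem coeffNorm_eq_sum_range {p : 𝕜[X]} {N : ℕ} (hp : p.natDegree < N) :
    coeffNorm ρ p = ∑ n ∈ Finset.range N, ‖p.coeff n‖ * ρ ^ n :=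
  sum_over_range' p (by simp) N hp

@[simp]
theorem coeffNorm_monomial (ρ : ℝ) (n : ℕ) (a : 𝕜) : coeffNorm ρ (monomial n a) = ‖a‖ * ρ ^ n :=
  sum_monomial_index a _ (by simp)

theorem coeffNorm_nonneg (hρ : 0 ≤ ρ) (p : 𝕜[X]) : 0 ≤ coeffNorm ρ p :=
  Finset.sum_nonneg fun _ _ => by positivity

theorem norm_coeff_mul_pow_le_coeffNorm (hρ : 0 ≤ ρ) (p : 𝕜[X]) (n : ℕ) :
    ‖p.coeff n‖ * ρ ^ n ≤ coeffNorm ρ p := by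
  by_cases hn : n ∈ p.support
  · exact Finset.single_le_sum (f := fun n => ‖p.coeff n‖ * ρ ^ n) (fun _ _ => by positivity) hn
  · rw [notMem_support_iff.1 hn, norm_zero, zero_mul]
    exact coeffNorm_nonneg hρ p

theorem norm_eval_le_coeffNorm {x : 𝕜} (hx : ‖x‖ ≤ ρ) (p : 𝕜[X]) : ‖p.eval x‖ ≤ coeffNorm ρ p := by
  rw [eval_eq_sum]
  refine (norm_sum_le _ _).trans (Finset.sum_le_sum fun n _ => ?_)
  rw [norm_mul, norm_pow]
  exact mul_le_mul_of_nonneg_left (pow_le_pow_left₀ (norm_nonneg x) hx n) (norm_nonneg _)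

theorem coeffNorm_add_le (hρ : 0 ≤ ρ) (p q : 𝕜[X]) :
    coeffNorm ρ (p + q) ≤ coeffNorm ρ p + coeffNorm ρ q := by
  have hp := (le_max_left p.natDegree q.natDegree).trans_lt (Nat.lt_succ_self _)
  have hq := (le_max_right p.natDegree q.natDegree).trans_lt (Nat.lt_succ_self _)
  rw [coeffNorm_eq_sum_range hp, coeffNorm_eq_sum_range hq,
    coeffNorm_eq_sum_range (Nat.lt_succ_of_le (natDegree_add_le p q)), ← Finset.sum_add_distrib]
  refine Finset.sum_le_sum fun n _ => ?_
  rw [coeff_add, ← add_mul]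
  gcongr
  exact norm_add_le _ _

theorem coeffNorm_sum_le {ι : Type*} (hρ : 0 ≤ ρ) (s : Finset ι) (f : ι → 𝕜[X]) :
    coeffNorm ρ (∑ i ∈ s, f i) ≤ ∑ i ∈ s, coeffNorm ρ (f i) :=
  Finset.le_sum_of_subadditive _ (by simp [coeffNorm]) (coeffNorm_add_le hρ) s f

theorem coeffNorm_mul_le (hρ : 0 ≤ ρ) (p q : 𝕜[X]) :
    coeffNorm ρ (p * q) ≤ coeffNorm ρ p * coeffNorm ρ q := by
  rw [mul_eq_sum_sum]
  refine (coeffNorm_sum_le hρ _ _).trans ?_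
  rw [coeffNorm, coeffNorm, sum_def, sum_def, Finset.sum_mul_sum]
  refine Finset.sum_le_sum fun i _ => (coeffNorm_sum_le hρ _ _).trans_eq ?_
  refine Finset.sum_congr rfl fun j _ => ?_
  rw [coeffNorm_monomial, norm_mul, pow_add]
  ring

end CoeffNorm

section TruncExp

open Polynomial

/-- The Taylor polynomial of degree less than `T` of `t ↦ exp (c * t)` at `0`. -/
noncomputable def truncExp (T : ℕ) (c : ℝ) : ℝ[X] :=
  ∑ q ∈ Finset.range T, monomial q (c ^ q / q.factorial)

theorem natDegree_truncExp_le (T : ℕ) (c : ℝ) : (truncExp T c).natDegree ≤ T - 1 :=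
  natDegree_sum_le_of_forall_le _ _ fun _ hq =>
    (natDegree_monomial_le _).trans (Nat.le_sub_one_of_lt (Finset.mem_range.1 hq))

theorem eval_truncExp (T : ℕ) (c t : ℝ) :
    (truncExp T c).eval t = ∑ q ∈ Finset.range T, (c * t) ^ q / q.factorial := by
  rw [truncExp, eval_finsetSum]
  refine Finset.sum_congr rfl fun q _ => ?_
  rw [eval_monomial, mul_pow]
  ring

theorem coeffNorm_truncExp_le {ρ : ℝ} (hρ : 0 ≤ ρ) (T : ℕ) (c : ℝ) :
    coeffNorm ρ (truncExp T c) ≤ Real.exp (|c| * ρ) := by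
  refine (coeffNorm_sum_le hρ _ _).trans (le_trans (Finset.sum_le_sum fun q _ => ?_)
    (Real.sum_le_exp_of_nonneg (by positivity) T))
  rw [coeffNorm_monomial, Real.norm_eq_abs, abs_div, abs_pow, Nat.abs_cast, mul_pow]
  apply le_of_eq
  ring

theorem abs_exp_sub_eval_truncExp_le {T : ℕ} {c t : ℝ} (h : 2 * |c * t| ≤ T) :
    |Real.exp (c * t) - (truncExp T c).eval t| ≤ 2 * Real.exp (2 * |c * t|) / 2 ^ T := by
  have htail : |Real.exp (c * t) - (truncExp T c).eval t| ≤ |c * t| ^ T / T.factorial * 2 := by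
    rw [eval_truncExp]
    have hratio : ‖((c * t : ℝ) : ℂ)‖ / T.succ ≤ 1 / 2 := by
      rw [Complex.norm_real, Real.norm_eq_abs, div_le_iff₀ (by positivity)]
      push_cast
      linarith
    have := Complex.exp_bound' hratio
    rw [Complex.norm_real, Real.norm_eq_abs] at this
    exact_mod_cast this
  calc |Real.exp (c * t) - (truncExp T c).eval t|
      ≤ 2 * ((2 * |c * t|) ^ T / T.factorial) / 2 ^ T := by
        refine htail.trans_eq ?_
        rw [mul_pow]
        field_simp
    _ ≤ 2 * Real.exp (2 * |c * t|) / 2 ^ T := by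
        gcongr
        exact Real.pow_div_factorial_le_exp _ (by positivity) T

end TruncExp

section BinomPoly

open Polynomial

variable {𝕜 : Type*} [Field 𝕜]

/-- The binomial coefficient of `κ * X` over `i` as a polynomial in `X`. -/
noncomputable def binomPoly (κ : 𝕜) (i : ℕ) : 𝕜[X] :=
  C (i.factorial : 𝕜)⁻¹ * (descPochhammer 𝕜 i).comp (C κ * X)

theorem binomPoly_succ (κ : 𝕜) (i : ℕ) :
    binomPoly κ (i + 1) = binomPoly κ i * (C ((i : 𝕜) + 1)⁻¹ * (C κ * X - C (i : 𝕜))) := by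
  rw [binomPoly, binomPoly, descPochhammer_succ_right, Nat.factorial_succ]
  push_cast
  rw [mul_inv, C_mul, mul_comp, sub_comp, X_comp, natCast_comp]
  simp only [map_natCast]
  ring

theorem eval_binomPoly_of_mul_eq_natCast [CharZero 𝕜] {κ t : 𝕜} {n : ℕ} (h : κ * t = n) (i : ℕ) :
    (binomPoly κ i).eval t = n.choose i := by
  simp [binomPoly, eval_comp, h, Nat.cast_choose_eq_descPochhammer_div, div_eq_inv_mul]

theorem degree_binomPoly [CharZero 𝕜] {κ : 𝕜} (hκ : κ ≠ 0) (i : ℕ) :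
    (binomPoly κ i).degree = i := by
  have hdeg : (descPochhammer 𝕜 i).degree = i := by
    rw [degree_eq_natDegree (monic_descPochhammer 𝕜 i).ne_zero, descPochhammer_natDegree]
  rw [binomPoly, degree_C_mul (inv_ne_zero (Nat.cast_ne_zero.2 i.factorial_ne_zero)),
    degree_comp (by rw [degree_C_mul_X hκ]; exact zero_lt_one), hdeg, degree_C_mul_X hκ, mul_one]

theorem linearIndependent_binomPoly [CharZero 𝕜] {κ : 𝕜} (hκ : κ ≠ 0) :
    LinearIndependent 𝕜 (binomPoly κ) :=
  (⟨binomPoly κ, degree_binomPoly hκ⟩ : Polynomial.Sequence 𝕜).linearIndependent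

theorem natDegree_binomPoly [CharZero 𝕜] {κ : 𝕜} (hκ : κ ≠ 0) (i : ℕ) :
    (binomPoly κ i).natDegree = i :=
  natDegree_eq_of_degree_eq_some (degree_binomPoly hκ i)

theorem coeffNorm_binomPoly_succ_le {κ ρ : ℝ} (hκ : 0 ≤ κ) (hρ : 0 ≤ ρ) (i : ℕ) :
    coeffNorm ρ (binomPoly κ (i + 1)) ≤ coeffNorm ρ (binomPoly κ i) * ((κ * ρ + i) / (i + 1)) := by
  have hfactor : C ((i : ℝ) + 1)⁻¹ * (C κ * X - C (i : ℝ)) =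
      monomial 1 (((i : ℝ) + 1)⁻¹ * κ) + monomial 0 (-(((i : ℝ) + 1)⁻¹ * i)) := by
    rw [← C_mul_X_eq_monomial, monomial_zero_left, C_neg, C_mul, C_mul]
    ring
  rw [binomPoly_succ]
  refine (coeffNorm_mul_le hρ _ _).trans (mul_le_mul_of_nonneg_left ?_ (coeffNorm_nonneg hρ _))
  rw [hfactor]
  refine (coeffNorm_add_le hρ _ _).trans_eq ?_
  rw [coeffNorm_monomial, coeffNorm_monomial, norm_neg, Real.norm_of_nonneg (by positivity),
    Real.norm_of_nonneg (by positivity)]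
  field_simp

theorem coeffNorm_binomPoly_le_prod {κ ρ : ℝ} (hκ : 0 ≤ κ) (hρ : 0 ≤ ρ) (i : ℕ) :
    coeffNorm ρ (binomPoly κ i) ≤ ∏ l ∈ Finset.range i, (κ * ρ + l) / (l + 1) := by
  induction i with
  | zero => simp [binomPoly, coeffNorm_eq_sum_range (ρ := ρ) (natDegree_one (R := ℝ) ▸ one_pos)]
  | succ i ih =>
    rw [Finset.prod_range_succ]
    exact (coeffNorm_binomPoly_succ_le hκ hρ i).trans (by gcongr)

theorem coeffNorm_binomPoly_le_pow {κ ρ : ℝ} {K i : ℕ} (hκ : 1 ≤ κ) (hρ : 1 ≤ ρ) (hρK : ρ ≤ K)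
    (hi : i ≤ K) : coeffNorm ρ (binomPoly κ i) ≤ (8 * κ) ^ K := by
  have hKK : (K : ℝ) ^ K / K.factorial ≤ 4 ^ K :=
    (Real.pow_div_factorial_le_exp _ K.cast_nonneg K).trans <| by
      rw [← mul_one (K : ℝ), Real.exp_nat_mul]
      gcongr
      exact (Real.exp_one_lt_three.trans (by norm_num)).le
  have hfactorial : ∏ l ∈ Finset.range K, ((l : ℝ) + 1) = K.factorial := by
    exact_mod_cast Finset.prod_range_add_one_eq_factorial K
  calc coeffNorm ρ (binomPoly κ i)
      ≤ ∏ l ∈ Finset.range i, (κ * ρ + l) / (l + 1) :=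
        coeffNorm_binomPoly_le_prod (by positivity) (by positivity) i
    _ ≤ ∏ l ∈ Finset.range K, (κ * ρ + l) / (l + 1) := by
        refine Finset.prod_le_prod_of_subset_of_one_le (Finset.range_subset_range.2 hi)
          (fun l _ => by positivity) fun l _ _ => ?_
        rw [one_le_div (by positivity)]
        nlinarith
    _ ≤ ∏ l ∈ Finset.range K, (2 * κ * K) / (l + 1) := by
        refine Finset.prod_le_prod (fun l _ => by positivity) fun l hl => ?_
        have hl : (l : ℝ) ≤ K := by exact_mod_cast (Finset.mem_range.1 hl).le
        gcongr
        nlinarith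
    _ = (2 * κ) ^ K * (K ^ K / K.factorial) := by
        rw [Finset.prod_div_distrib, Finset.prod_const, Finset.card_range, hfactorial]
        ring
    _ ≤ (2 * κ) ^ K * 4 ^ K := by gcongr
    _ = (8 * κ) ^ K := by
        rw [← mul_pow]
        ring

end BinomPoly

section Siegel

variable {ι κ : Type*} [Fintype ι] [Fintype κ]

open scoped Matrix.Norms.Elementwise in
theorem exists_ne_zero_int_vec_abs_sum_le [Nonempty κ]
    (hcard : Fintype.card κ < Fintype.card ι) {c : ι → κ → ℝ} {M W B : ℝ} (hW : 0 < W)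
    (hB : 0 ≤ B) (hWM : 1 ≤ W * M) (hc : ∀ i q, |c i q| ≤ M)
    (h : (Fintype.card ι * (2 * (W * M))) ^ Fintype.card κ ≤
      B ^ (Fintype.card ι - Fintype.card κ)) :
    ∃ p : ι → ℤ, p ≠ 0 ∧ (∀ i, |(p i : ℝ)| ≤ B) ∧
      ∀ q, |∑ i, p i * c i q| ≤ Fintype.card ι * B / W := by
  let A : Matrix κ ι ℤ := Matrix.of fun q i => round (W * c i q)
  have hround (q : κ) (i : ι) : |W * c i q - A q i| ≤ 1 :=
    (abs_sub_round _).trans (by norm_num)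
  have hA : max 1 ‖A‖ ≤ 2 * (W * M) := by
    refine max_le (by linarith) ((Matrix.norm_le_iff (by linarith)).2 fun q i => ?_)
    have hWc : |W * c i q| ≤ W * M := by
      rw [abs_mul, abs_of_pos hW]
      exact mul_le_mul_of_nonneg_left (hc i q) hW.le
    rw [Int.norm_eq_abs, abs_le]
    constructor <;> linarith [abs_le.1 (hround q i), abs_le.1 hWc]
  obtain ⟨p, hp0, hp, hpnorm⟩ :=
    Int.Matrix.exists_ne_zero_int_vec_norm_le A hcard Fintype.card_pos
  have hpB (i : ι) : |(p i : ℝ)| ≤ B := by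
    rw [← Int.norm_eq_abs]
    refine (norm_le_pi_norm p i).trans (hpnorm.trans ?_)
    have hne : Fintype.card ι - Fintype.card κ ≠ 0 := by lia
    rw [← Nat.cast_sub hcard.le, div_eq_mul_inv, Real.rpow_mul (by positivity),
      Real.rpow_natCast, ← Real.pow_rpow_inv_natCast hB hne]
    refine Real.rpow_le_rpow (by positivity) (le_trans ?_ h) (by positivity)
    gcongr
  refine ⟨p, hp0, hpB, fun q => ?_⟩
  have hker : ∑ i, (A q i : ℝ) * p i = 0 := by exact_mod_cast congrFun hp q
  rw [le_div_iff₀ hW]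
  calc |∑ i, p i * c i q| * W = |∑ i, p i * (W * c i q - A q i)| := by
        rw [← abs_of_pos hW, ← abs_mul, abs_of_pos hW, ← sub_zero (_ * W), ← hker, Finset.sum_mul,
          ← Finset.sum_sub_distrib]
        congr 1
        exact Finset.sum_congr rfl fun i _ => by ring
    _ ≤ ∑ i, |(p i : ℝ) * (W * c i q - A q i)| := Finset.abs_sum_le_sum_abs _ _
    _ ≤ ∑ _ : ι, B * 1 := by
        refine Finset.sum_le_sum fun i _ => ?_
        rw [abs_mul]
        exact mul_le_mul (hpB i) (hround q i) (abs_nonneg _) hB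
    _ = Fintype.card ι * B := by simp

open Polynomial in
theorem exists_ne_zero_int_vec_coeffNorm_sum_le {N : ℕ} [NeZero N] (hcard : N < Fintype.card ι)
    {ρ : ℝ} (hρ : 0 ≤ ρ) {G : ι → ℝ[X]} (hG : ∀ i, (G i).natDegree < N) {M W B : ℝ} (hW : 0 < W)
    (hB : 0 ≤ B) (hWM : 1 ≤ W * M) (hGM : ∀ i, coeffNorm ρ (G i) ≤ M)
    (h : (Fintype.card ι * (2 * (W * M))) ^ N ≤ B ^ (Fintype.card ι - N)) :
    ∃ p : ι → ℤ, p ≠ 0 ∧ (∀ i, |(p i : ℝ)| ≤ B) ∧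
      coeffNorm ρ (∑ i, C (p i : ℝ) * G i) ≤ N * (Fintype.card ι * B / W) := by
  have hcoeff (i : ι) (n : Fin N) : |(G i).coeff n * ρ ^ (n : ℕ)| ≤ M := by
    rw [abs_mul, abs_of_nonneg (pow_nonneg hρ _)]
    exact (norm_coeff_mul_pow_le_coeffNorm hρ _ _).trans (hGM i)
  obtain ⟨p, hp0, hpB, hp⟩ := exists_ne_zero_int_vec_abs_sum_le (κ := Fin N)
    (by simpa using hcard) hW hB hWM hcoeff (by simpa using h)
  refine ⟨p, hp0, hpB, ?_⟩
  have hdeg : (∑ i, C (p i : ℝ) * G i).natDegree < N :=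
    (Nat.le_sub_one_iff_lt (NeZero.pos N)).1 <| natDegree_sum_le_of_forall_le _ _ fun i _ =>
      (natDegree_C_mul_le _ _).trans (Nat.le_sub_one_of_lt (hG i))
  rw [coeffNorm_eq_sum_range hdeg, Finset.sum_range]
  refine (Finset.sum_le_sum (g := fun _ => Fintype.card ι * B / W) fun n _ => ?_).trans_eq
    (by simp)
  refine le_trans (le_of_eq ?_) (hp n)
  simp only [finsetSum_coeff, coeff_C_mul, ← mul_assoc, ← Finset.sum_mul]
  rw [abs_mul, abs_of_nonneg (pow_nonneg hρ _), Real.norm_eq_abs]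

end Siegel

theorem one_le_norm_mul_pow_of_isIntegral {F : Type*} [Field F] [NumberField F] {z : F}
    (hz : IsIntegral ℤ z) (hz0 : z ≠ 0) {M : ℝ} (hM : ∀ σ : F →ₐ[ℚ] ℂ, ‖σ z‖ ≤ M)
    (σ₀ : F →ₐ[ℚ] ℂ) : 1 ≤ ‖σ₀ z‖ * M ^ (Module.finrank ℚ F - 1) := by
  classical
  obtain ⟨n, hn⟩ := IsIntegrallyClosed.isIntegral_iff.1 (Algebra.isIntegral_norm ℚ hz)
  have hn0 : n ≠ 0 := by
    rintro rfl
    exact (Algebra.norm_ne_zero_iff (R := ℚ)).2 hz0 (by simp [← hn])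
  have hprod : (1 : ℝ) ≤ ∏ σ : F →ₐ[ℚ] ℂ, ‖σ z‖ := by
    rw [← norm_prod, ← Algebra.norm_eq_prod_embeddings ℚ ℂ z, ← hn, eq_intCast, map_intCast,
      Complex.norm_intCast]
    exact_mod_cast Int.one_le_abs hn0
  refine hprod.trans ?_
  rw [← Finset.mul_prod_erase _ _ (Finset.mem_univ σ₀), ← AlgHom.card ℚ F ℂ, ← Finset.card_univ,
    ← Finset.card_erase_of_mem (Finset.mem_univ σ₀)]
  gcongr
  rw [← Finset.prod_const]
  exact Finset.prod_le_prod (fun _ _ => norm_nonneg _) fun σ _ => hM σ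

section AuxValue

open Polynomial

variable {K L : ℕ}

/-- The auxiliary function `t ↦ ∑ p (i, j) * (t.choose i) * x ^ (j * t)` at `t = r + s * k`, where
`y` takes the place of `x ^ k`. It is small as an approximation to the actual power, and algebraic
as `y` is independent of the large number `k`. -/
def auxValue {R : Type*} [CommRing R] (p : Fin K × Fin L → ℤ) (x y : R) (k r s : ℕ) : R :=
  ∑ z, p z * ((r + s * k).choose z.1 * (x ^ r * y ^ s) ^ (z.2 : ℕ))

theorem map_auxValue {R R' : Type*} [CommRing R] [CommRing R'] (f : R →+* R')
    (p : Fin K × Fin L → ℤ) (x y : R) (k r s : ℕ) :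
    f (auxValue p x y k r s) = auxValue p (f x) (f y) k r s := by
  simp [auxValue]

section ZeroEstimate

variable {𝕜 : Type*} [Field 𝕜] [CharZero 𝕜]

/-- The polynomial in `t` by which `x ^ (j * t)` is multiplied in the auxiliary function. -/
noncomputable def auxPoly (𝕜 : Type*) [Field 𝕜] (p : Fin K × Fin L → ℤ) (j : Fin L) : 𝕜[X] :=
  ∑ i, C (p (i, j) : 𝕜) * binomPoly 1 (i : ℕ)

theorem auxPoly_ne_zero {p : Fin K × Fin L → ℤ} (hp : p ≠ 0) : auxPoly 𝕜 p ≠ 0 := by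
  contrapose! hp
  have hli := (linearIndependent_binomPoly (one_ne_zero (α := 𝕜))).comp _
    (Fin.val_injective (n := K))
  ext ⟨i, j⟩
  have hcoeff := Fintype.linearIndependent_iff.1 hli (fun i => (p (i, j) : 𝕜))
    (by simp only [smul_eq_C_mul]; exact congrFun hp j) i
  exact_mod_cast hcoeff

theorem natDegree_auxPoly_le (p : Fin K × Fin L → ℤ) (j : Fin L) :
    (auxPoly 𝕜 p j).natDegree ≤ K - 1 :=
  natDegree_sum_le_of_forall_le _ _ fun i _ => (natDegree_C_mul_le _ _).trans <| by
    rw [natDegree_binomPoly one_ne_zero]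
    lia

theorem auxValue_eq_sum_auxPoly (p : Fin K × Fin L → ℤ) (x y : 𝕜) (k r s : ℕ) :
    auxValue p x y k r s =
      ∑ j : Fin L, (x ^ r * y ^ s) ^ (j : ℕ) * (auxPoly 𝕜 p j).eval ((r + s * k : ℕ) : 𝕜) := by
  rw [auxValue, Fintype.sum_prod_type_right]
  refine Finset.sum_congr rfl fun j _ => ?_
  rw [auxPoly, eval_finsetSum, Finset.mul_sum]
  refine Finset.sum_congr rfl fun i _ => ?_
  rw [eval_C_mul, eval_binomPoly_of_mul_eq_natCast (one_mul _)]
  ring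

theorem mul_le_of_forall_auxValue_eq_zero {p : Fin K × Fin L → ℤ} (hp : p ≠ 0) {x y : 𝕜}
    (hx : Function.Injective fun n : ℕ => x ^ n) (hx0 : x ≠ 0) (hy : y ≠ 0) {R S k : ℕ}
    (hRk : R ≤ k) (h : ∀ r < R + L, ∀ s < S, auxValue p x y k r s = 0) :
    R * S ≤ L * (K - 1) := by
  classical
  let Z : Finset 𝕜 := (Finset.range R ×ˢ Finset.range S).image fun z => ((z.1 + z.2 * k : ℕ) : 𝕜)
  have hZ : Z.card = R * S := by
    rw [Finset.card_image_of_injOn, Finset.card_product, Finset.card_range, Finset.card_range]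
    rintro ⟨r, s⟩ hr ⟨r', s'⟩ hr' heq
    simp only [Finset.coe_product, Set.mem_prod, Finset.mem_coe, Finset.mem_range] at hr hr'
    have heq : r + s * k = r' + s' * k := Nat.cast_injective heq
    have hmod := congrArg (· % k) heq
    have hdiv := congrArg (· / k) heq
    have hk : 0 < k := by lia
    simp only [Nat.add_mul_mod_self_right, Nat.add_mul_div_right _ _ hk,
      Nat.mod_eq_of_lt (hr.1.trans_le hRk), Nat.mod_eq_of_lt (hr'.1.trans_le hRk),
      Nat.div_eq_of_lt (hr.1.trans_le hRk), Nat.div_eq_of_lt (hr'.1.trans_le hRk),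
      zero_add] at hmod hdiv
    rw [hmod, hdiv]
  have hv : Function.Injective fun j : Fin L => x ^ (j : ℕ) := hx.comp Fin.val_injective
  calc R * S = Z.card := hZ.symm
    _ ≤ ∑ j : Fin L, (auxPoly 𝕜 p j).natDegree := by
        refine card_le_sum_natDegree hv (auxPoly_ne_zero hp) fun z hz => ?_
        simp only [Z, Finset.mem_image, Finset.mem_product, Finset.mem_range] at hz
        obtain ⟨⟨r, s⟩, ⟨hr, hs⟩, rfl⟩ := hz
        refine ⟨fun j => (x ^ r * y ^ s) ^ (j : ℕ), fun j => by positivity, fun ρ hρ => ?_⟩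
        rw [Fintype.card_fin] at hρ
        rw [← h (r + ρ) (by lia) s hs, auxValue_eq_sum_auxPoly]
        refine Finset.sum_congr rfl fun j _ => ?_
        push_cast
        ring_nf
    _ ≤ ∑ _ : Fin L, (K - 1) := Finset.sum_le_sum fun j _ => natDegree_auxPoly_le p j
    _ = L * (K - 1) := by simp

end ZeroEstimate

section Small

theorem abs_one_add_pow_sub_one_le {η : ℝ} (hη : |η| ≤ 1) (n : ℕ) :
    |(1 + η) ^ n - 1| ≤ 2 ^ n * |η| := by
  have htwo : |1 + η| ≤ 2 := by linarith [abs_add_le 1 η, abs_one (α := ℝ)]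
  calc |(1 + η) ^ n - 1| = |∑ l ∈ Finset.range n, (1 + η) ^ l| * |η| := by
        rw [← geom_sum_mul, add_sub_cancel_left, abs_mul]
    _ ≤ (∑ l ∈ Finset.range n, 2 ^ l) * |η| := by
        gcongr
        refine (Finset.abs_sum_le_sum_abs _ _).trans (Finset.sum_le_sum fun l _ => ?_)
        rw [abs_pow]
        gcongr
    _ ≤ 2 ^ n * |η| := by
        gcongr
        linarith [mul_neg_geom_sum (2 : ℝ) n]

theorem abs_exp_mul_pow_sub_eval_truncExp_le {T n : ℕ} {c t Λ η : ℝ} (hct : |c * t| ≤ Λ)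
    (hT : 2 * Λ ≤ T) (hη : |η| ≤ 1) :
    |Real.exp (c * t) * (1 + η) ^ n - (truncExp T c).eval t| ≤
      Real.exp Λ * (2 ^ n * |η|) + 2 * Real.exp (2 * Λ) / 2 ^ T :=
  calc |Real.exp (c * t) * (1 + η) ^ n - (truncExp T c).eval t|
      = |Real.exp (c * t) * ((1 + η) ^ n - 1) +
          (Real.exp (c * t) - (truncExp T c).eval t)| := by ring_nf
    _ ≤ Real.exp (c * t) * |(1 + η) ^ n - 1| +
          |Real.exp (c * t) - (truncExp T c).eval t| := by
        refine (abs_add_le _ _).trans_eq ?_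
        rw [abs_mul, Real.abs_exp]
    _ ≤ Real.exp Λ * (2 ^ n * |η|) + 2 * Real.exp (2 * Λ) / 2 ^ T := by
        gcongr
        · exact (le_abs_self _).trans hct
        · exact abs_one_add_pow_sub_one_le hη n
        · refine (abs_exp_sub_eval_truncExp_le (by linarith)).trans ?_
          gcongr

theorem natCast_mul_add_div {k : ℕ} (hk : k ≠ 0) (r s : ℕ) :
    (k * (s + r / k) : ℝ) = (r + s * k : ℕ) := by
  push_cast
  field_simp
  ring

theorem abs_add_div_le {k r s S : ℕ} (hr : r < k) (hs : s < S) : |(s + r / k : ℝ)| ≤ S := by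
  have hs : (s + 1 : ℝ) ≤ S := by exact_mod_cast hs
  have hr : (r / k : ℝ) ≤ 1 := div_le_one_of_le₀ (by exact_mod_cast hr.le) k.cast_nonneg
  rw [abs_of_nonneg (by positivity)]
  linarith

theorem mul_pow_mul_pow_eq_exp {x : ℝ} (hx : 0 < x) (y : ℝ) {k : ℕ} (hk : k ≠ 0) (r s j : ℕ) :
    (x ^ r * (x ^ k * y) ^ s) ^ j =
      Real.exp (j * (k * Real.log x) * (s + r / k)) * y ^ (s * j) := by
  have hexp : Real.exp (j * (k * Real.log x) * (s + r / k)) = x ^ ((r + s * k) * j) := by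
    rw [show j * (k * Real.log x) * (s + r / k) = ((r + s * k) * j : ℕ) * Real.log x by
      rw [Nat.cast_mul, ← natCast_mul_add_div hk]
      ring, Real.exp_nat_mul, Real.exp_log hx]
  rw [hexp]
  simp only [mul_pow, ← pow_mul, add_mul, pow_add]
  ring_nf

/-- A polynomial approximation to `t ↦ (k * t).choose i * x ^ (j * k * t)`. -/
noncomputable def approxTerm (T : ℕ) (x : ℝ) (k : ℕ) (z : Fin K × Fin L) : ℝ[X] :=
  binomPoly (k : ℝ) z.1 * truncExp T (z.2 * (k * Real.log x))

theorem natDegree_approxTerm_lt {T : ℕ} {x : ℝ} {k : ℕ} (hk : k ≠ 0) (z : Fin K × Fin L) :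
    (approxTerm T x k z).natDegree < K + T := by
  refine natDegree_mul_le.trans_lt ?_
  rw [natDegree_binomPoly (Nat.cast_ne_zero.2 hk)]
  have := natDegree_truncExp_le T (z.2 * (k * Real.log x))
  lia

variable {S : ℕ} {Λ : ℝ}

theorem coeffNorm_binomPoly_natCast_le {k : ℕ} (hk : 1 ≤ k) (hS : 1 ≤ S) (hSK : S ≤ K)
    (i : Fin K) : coeffNorm (S : ℝ) (binomPoly (k : ℝ) i) ≤ (8 * k) ^ K :=
  coeffNorm_binomPoly_le_pow (by exact_mod_cast hk) (by exact_mod_cast hS) (by exact_mod_cast hSK)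
    i.2.le

theorem choose_add_mul_le_pow {k r s : ℕ} (hr : r < k) (hs : s < S) (hSK : S ≤ K) (i : Fin K) :
    ((r + s * k).choose i : ℝ) ≤ (8 * k) ^ K := by
  rw [← eval_binomPoly_of_mul_eq_natCast (natCast_mul_add_div hr.ne_zero r s)]
  exact (le_abs_self _).trans <| (norm_eval_le_coeffNorm (abs_add_div_le hr hs) _).trans
    (coeffNorm_binomPoly_natCast_le hr.pos hs.pos hSK i)

theorem coeffNorm_approxTerm_le {T : ℕ} {x : ℝ} {k : ℕ} (hk : 1 ≤ k) (hS : 1 ≤ S) (hSK : S ≤ K)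
    (hΛ : L * |k * Real.log x| * S ≤ Λ) (z : Fin K × Fin L) :
    coeffNorm (S : ℝ) (approxTerm T x k z) ≤ (8 * k) ^ K * Real.exp Λ := by
  refine (coeffNorm_mul_le S.cast_nonneg _ _).trans (mul_le_mul
    (coeffNorm_binomPoly_natCast_le hk hS hSK z.1)
    ((coeffNorm_truncExp_le S.cast_nonneg T _).trans (Real.exp_le_exp.2 (le_trans ?_ hΛ)))
    (coeffNorm_nonneg S.cast_nonneg _) (by positivity))
  rw [abs_mul, Nat.abs_cast]
  have : ((z.2 : ℕ) : ℝ) ≤ L := by exact_mod_cast z.2.2.le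
  gcongr

theorem abs_term_sub_eval_approxTerm_le {T : ℕ} {x η : ℝ} {k r s : ℕ} (hx : 0 < x) (hη : |η| ≤ 1)
    (hr : r < k) (hs : s < S) (hSK : S ≤ K) (hΛ : L * |k * Real.log x| * S ≤ Λ)
    (hT : 2 * Λ ≤ T) (z : Fin K × Fin L) :
    |(r + s * k).choose z.1 * (x ^ r * (x ^ k * (1 + η)) ^ s) ^ (z.2 : ℕ) -
        (approxTerm T x k z).eval (s + r / k : ℝ)| ≤
      (8 * k) ^ K * (Real.exp Λ * (2 ^ (S * L) * |η|) + 2 * Real.exp (2 * Λ) / 2 ^ T) := by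
  obtain ⟨i, j⟩ := z
  have hj : ((j : ℕ) : ℝ) ≤ L := by exact_mod_cast j.2.le
  have harg : |j * (k * Real.log x) * (s + r / k)| ≤ Λ := by
    refine le_trans ?_ hΛ
    rw [abs_mul, abs_mul, Nat.abs_cast]
    gcongr
    exact abs_add_div_le hr hs
  rw [mul_pow_mul_pow_eq_exp hx _ hr.ne_zero, approxTerm, eval_mul,
    eval_binomPoly_of_mul_eq_natCast (natCast_mul_add_div hr.ne_zero r s), ← mul_sub, abs_mul,
    Nat.abs_cast]
  refine mul_le_mul (choose_add_mul_le_pow hr hs hSK i) ?_ (abs_nonneg _) (by positivity)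
  refine (abs_exp_mul_pow_sub_eval_truncExp_le harg hT hη).trans ?_
  gcongr
  · exact one_le_two
  · exact j.2.le

theorem abs_auxValue_le {T : ℕ} {x η B : ℝ} {k r s : ℕ} {p : Fin K × Fin L → ℤ}
    (hp : ∀ z, |(p z : ℝ)| ≤ B) (hx : 0 < x) (hη : |η| ≤ 1) (hr : r < k) (hs : s < S)
    (hSK : S ≤ K) (hΛ : L * |k * Real.log x| * S ≤ Λ) (hT : 2 * Λ ≤ T) :
    |auxValue p x (x ^ k * (1 + η)) k r s| ≤
      coeffNorm (S : ℝ) (∑ z, C (p z : ℝ) * approxTerm T x k z) +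
        K * L * (B * ((8 * k) ^ K *
          (Real.exp Λ * (2 ^ (S * L) * |η|) + 2 * Real.exp (2 * Λ) / 2 ^ T))) := by
  set P := ∑ z, C (p z : ℝ) * approxTerm T x k z with hP
  set t : ℝ := s + r / k
  set E := (8 * k) ^ K *
    (Real.exp Λ * (2 ^ (S * L) * |η|) + 2 * Real.exp (2 * Λ) / 2 ^ T)
  have hdiff : |auxValue p x (x ^ k * (1 + η)) k r s - P.eval t| ≤ K * L * (B * E) := by
    rw [auxValue, hP, eval_finsetSum, ← Finset.sum_sub_distrib]
    refine (Finset.abs_sum_le_sum_abs _ _).trans ?_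
    refine (Finset.sum_le_card_nsmul _ _ (B * E) fun z _ => ?_).trans_eq (by simp)
    rw [eval_C_mul, ← mul_sub, abs_mul]
    exact mul_le_mul (hp z) (abs_term_sub_eval_approxTerm_le hx hη hr hs hSK hΛ hT z)
      (abs_nonneg _) ((abs_nonneg _).trans (hp z))
  have hPt : |P.eval t| ≤ coeffNorm (S : ℝ) P := norm_eval_le_coeffNorm (abs_add_div_le hr hs) P
  linarith [abs_sub_abs_le_abs_sub (auxValue p x (x ^ k * (1 + η)) k r s) (P.eval t)]

end Small

section Arithmetic

variable {S R k r s d : ℕ}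

theorem natCast_pow_mul_auxValue {A : Type*} [CommRing A] (hs : s ≤ S) (p : Fin K × Fin L → ℤ)
    (x y : A) : d ^ (S * L) * auxValue p x y k r s =
      ∑ z : Fin K × Fin L, p z * ((r + s * k).choose z.1 *
        (x ^ (r * z.2) * ((d * y) ^ (s * z.2) * d ^ (S * L - s * z.2)))) := by
  rw [auxValue, Finset.mul_sum]
  refine Finset.sum_congr rfl fun z _ => ?_
  nth_rw 1 [← Nat.add_sub_of_le (Nat.mul_le_mul hs z.2.2.le)]
  simp only [pow_add, mul_pow, ← pow_mul]
  ring

theorem norm_natCast_pow_mul_auxValue_le {x y : ℂ} {p : Fin K × Fin L → ℤ} {B M X Y : ℝ}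
    (hp : ∀ z, |(p z : ℝ)| ≤ B) (hM : ∀ i : Fin K, ((r + s * k).choose i : ℝ) ≤ M) (hX : 1 ≤ X)
    (hY : 1 ≤ Y) (hd : d ≤ Y) (hx : ‖x‖ ≤ X) (hy : ‖d * y‖ ≤ Y) (hr : r ≤ R) (hs : s ≤ S) :
    ‖d ^ (S * L) * auxValue p x y k r s‖ ≤ K * L * (B * (M * (X ^ (R * L) * Y ^ (S * L)))) := by
  rw [natCast_pow_mul_auxValue hs]
  refine (norm_sum_le _ _).trans ?_
  refine (Finset.sum_le_card_nsmul _ _ (B * (M * (X ^ (R * L) * Y ^ (S * L))))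
    fun z _ => ?_).trans_eq (by simp)
  have hpz := hp z
  have hMz := hM z.1
  simp only [norm_mul, norm_pow, Complex.norm_natCast, Complex.norm_intCast] at hy ⊢
  gcongr
  · exact (abs_nonneg _).trans hpz
  · exact (Nat.cast_nonneg _).trans hMz
  · calc ‖x‖ ^ (r * z.2) ≤ X ^ (r * z.2) := by gcongr
      _ ≤ X ^ (R * L) := pow_le_pow_right₀ hX (Nat.mul_le_mul hr z.2.2.le)
  · calc (d * ‖y‖) ^ (s * z.2) * (d : ℝ) ^ (S * L - s * z.2)
        ≤ Y ^ (s * z.2) * Y ^ (S * L - s * z.2) := by gcongr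
      _ = Y ^ (S * L) := by rw [← pow_add, Nat.add_sub_of_le (Nat.mul_le_mul hs z.2.2.le)]

theorem isIntegral_natCast_pow_mul_auxValue {A : Type*} [CommRing A] {x y : A}
    (hx : IsIntegral ℤ x) (hy : IsIntegral ℤ (d * y)) (hs : s ≤ S) (p : Fin K × Fin L → ℤ) :
    IsIntegral ℤ (d ^ (S * L) * auxValue p x y k r s) := by
  rw [natCast_pow_mul_auxValue hs]
  exact IsIntegral.sum _ fun z _ => (isIntegral_intCast _).mul ((isIntegral_natCast _).mul
    ((hx.pow _).mul ((hy.pow _).mul ((isIntegral_natCast _).pow _))))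

theorem one_le_norm_auxValue_mul {F : Type*} [Field F] [NumberField F] {x y : F}
    (hxint : IsIntegral ℤ x) (hyint : IsIntegral ℤ (d * y)) {p : Fin K × Fin L → ℤ} {B M X Y : ℝ}
    (hp : ∀ z, |(p z : ℝ)| ≤ B) (hM : ∀ i : Fin K, ((r + s * k).choose i : ℝ) ≤ M)
    (hX : 1 ≤ X) (hY : 1 ≤ Y) (hd : d ≤ Y) (hx : ∀ σ : F →ₐ[ℚ] ℂ, ‖σ x‖ ≤ X)
    (hy : ∀ σ : F →ₐ[ℚ] ℂ, ‖σ (d * y)‖ ≤ Y) (hd0 : d ≠ 0) (hr : r ≤ R) (hs : s ≤ S)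
    (hne : auxValue p x y k r s ≠ 0) (σ₀ : F →ₐ[ℚ] ℂ) :
    1 ≤ d ^ (S * L) * ‖auxValue p (σ₀ x) (σ₀ y) k r s‖ *
      (K * L * (B * (M * (X ^ (R * L) * Y ^ (S * L))))) ^ (Module.finrank ℚ F - 1) := by
  have hmap (σ : F →ₐ[ℚ] ℂ) : σ (d ^ (S * L) * auxValue p x y k r s) =
      d ^ (S * L) * auxValue p (σ x) (σ y) k r s := by
    rw [map_mul, map_pow, map_natCast]
    exact congrArg _ (map_auxValue (σ : F →+* ℂ) p x y k r s)
  have h := one_le_norm_mul_pow_of_isIntegral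
    (isIntegral_natCast_pow_mul_auxValue hxint hyint hs p)
    (mul_ne_zero (pow_ne_zero _ (Nat.cast_ne_zero.2 hd0)) hne)
    (fun σ => (congrArg _ (hmap σ)).trans_le <|
      norm_natCast_pow_mul_auxValue_le hp hM hX hY hd (hx σ) (by simpa using hy σ) hr hs) σ₀
  rwa [hmap, norm_mul, norm_pow, Complex.norm_natCast] at h

end Arithmetic

end AuxValue

section LowerBound

open Polynomial

variable {S U k : ℕ}

theorem natCast_mul_natCast_le_two_pow (hU : 10 ^ 5 ≤ U) :
    (U : ℝ) * (10 ^ 5 : ℕ) ≤ 2 ^ (2 * U) := by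
  have hlt : (U : ℝ) ≤ 2 ^ U := by exact_mod_cast (Nat.lt_two_pow_self (n := U)).le
  have hU : ((10 ^ 5 : ℕ) : ℝ) ≤ U := by exact_mod_cast hU
  calc (U : ℝ) * (10 ^ 5 : ℕ) ≤ 2 ^ U * 2 ^ U := by gcongr; exact hU.trans hlt
    _ = 2 ^ (2 * U) := by ring

theorem eight_mul_pow_le_two_pow (hk : k ≤ 2 ^ 62) : (8 * k : ℝ) ^ U ≤ 2 ^ (65 * U) := by
  rw [pow_mul]
  gcongr
  have hk : (k : ℝ) ≤ 2 ^ 62 := by exact_mod_cast hk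
  linarith

theorem exp_mul_le_two_pow (U : ℕ) : Real.exp (25 * U) ≤ 2 ^ (37 * U) := by
  rw [mul_comm, Real.exp_nat_mul, pow_mul]
  gcongr
  have h := Real.exp_one_lt_d9.le
  calc Real.exp 25 = Real.exp 1 ^ 25 := by rw [← Real.exp_nat_mul]; norm_num
    _ ≤ 2.7182818286 ^ 25 := by gcongr
    _ ≤ 2 ^ 37 := by norm_num

variable {x : ℝ}

theorem mul_abs_mul_le (hU : U = 10 ^ 5 * S) (hΛ : |k * Real.log x| ≤ 25) :
    (10 ^ 5 : ℕ) * |k * Real.log x| * S ≤ 25 * U := by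
  rw [hU]
  push_cast
  nlinarith [S.cast_nonneg (α := ℝ)]

theorem coeffNorm_approxTerm_le_two_pow (hS : 0 < S) (hU : U = 10 ^ 5 * S) (hk0 : 0 < k)
    (hk : k ≤ 2 ^ 62) (hΛ : |k * Real.log x| ≤ 25) (T : ℕ) (z : Fin U × Fin (10 ^ 5)) :
    coeffNorm (S : ℝ) (approxTerm T x k z) ≤ 2 ^ (102 * U) := by
  refine (coeffNorm_approxTerm_le hk0 hS (by lia) (mul_abs_mul_le hU hΛ) z).trans ?_
  calc (8 * k : ℝ) ^ U * Real.exp (25 * U) ≤ 2 ^ (65 * U) * 2 ^ (37 * U) := by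
        gcongr
        · exact eight_mul_pow_le_two_pow hk
        · exact exp_mul_le_two_pow U
    _ = 2 ^ (102 * U) := by rw [← pow_add]; ring_nf

-- There are `10 ^ 5 * U` unknowns `p z` but only `U + 1400 * U` coefficients to be made small; this
-- excess is what allows a gain of `2 ^ (1200 * U)` with unknowns as small as `2 ^ (30 * U)`.
theorem exists_coeffNorm_sum_mul_le_one (hS : 0 < S) (hU : U = 10 ^ 5 * S) (hk0 : 0 < k)
    (hk : k ≤ 2 ^ 62) (hΛ : |k * Real.log x| ≤ 25) :
    ∃ p : Fin U × Fin (10 ^ 5) → ℤ, p ≠ 0 ∧ (∀ z, |(p z : ℝ)| ≤ 2 ^ (30 * U)) ∧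
      coeffNorm (S : ℝ) (∑ z, C (p z : ℝ) * approxTerm (1400 * U) x k z) * 2 ^ (1166 * U) ≤ 1 := by
  have hKL := natCast_mul_natCast_le_two_pow (U := U) (by lia)
  have : NeZero (U + 1400 * U) := ⟨by lia⟩
  have hcard : Fintype.card (Fin U × Fin (10 ^ 5)) = U * 10 ^ 5 := by simp
  have hsiegel : (Fintype.card (Fin U × Fin (10 ^ 5)) *
      (2 * (2 ^ (1200 * U) * 2 ^ (102 * U))) : ℝ) ^ (U + 1400 * U) ≤
        (2 ^ (30 * U)) ^ (Fintype.card (Fin U × Fin (10 ^ 5)) - (U + 1400 * U)) := by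
    rw [hcard, Nat.cast_mul, show U * 10 ^ 5 - (U + 1400 * U) = 98599 * U by lia]
    calc _ ≤ (2 ^ (2 * U) * (2 ^ 1 * (2 ^ (1200 * U) * 2 ^ (102 * U))) : ℝ) ^ (U + 1400 * U) := by
          rw [pow_one]
          gcongr
      _ ≤ (2 ^ (30 * U)) ^ (98599 * U) := by
          simp only [← pow_add, ← pow_mul]
          exact pow_le_pow_right₀ one_le_two (by nlinarith)
  obtain ⟨p, hp0, hp, hpsum⟩ := exists_ne_zero_int_vec_coeffNorm_sum_le
    (by lia) S.cast_nonneg (natDegree_approxTerm_lt hk0.ne') (by positivity) (by positivity)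
    (by rw [← pow_add]; exact one_le_pow₀ one_le_two)
    (coeffNorm_approxTerm_le_two_pow hS hU hk0 hk hΛ _) hsiegel
  refine ⟨p, hp0, hp, ?_⟩
  have hN : ((U + 1400 * U : ℕ) : ℝ) ≤ 2 ^ (2 * U) := by
    refine le_trans ?_ hKL
    exact_mod_cast (by lia : U + 1400 * U ≤ U * 10 ^ 5)
  calc _ ≤ (2 ^ (2 * U) * (2 ^ (2 * U) * 2 ^ (30 * U) / 2 ^ (1200 * U)) * 2 ^ (1166 * U) : ℝ) := by
        gcongr
        refine hpsum.trans ?_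
        rw [hcard, Nat.cast_mul]
        gcongr
    _ = 1 := by
        rw [mul_div_assoc', div_mul_eq_mul_div, div_eq_one_iff_eq (by positivity)]
        simp only [← pow_add]
        ring_nf

theorem mul_exp_mul_add_mul_le (hU : 10 ^ 5 ≤ U) (hk : k ≤ 2 ^ 62) {η : ℝ}
    (hη : |η| * 2 ^ (1300 * U) ≤ 1) :
    U * (10 ^ 5 : ℕ) * (2 ^ (30 * U) * ((8 * k) ^ U * (Real.exp (25 * U) * (2 ^ U * |η|) +
      2 * Real.exp (2 * (25 * U)) / 2 ^ (1400 * U)))) * 2 ^ (1165 * U) ≤ 2 := by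
  have hexp := exp_mul_le_two_pow U
  have hexp_two : 2 * Real.exp (2 * (25 * U)) ≤ 2 ^ U * (2 ^ (37 * U)) ^ 2 := by
    rw [two_mul (25 * (U : ℝ)), Real.exp_add, ← sq]
    gcongr
    exact le_self_pow₀ one_le_two (by lia)
  have hmain : 2 ^ (1300 * U) * |η| ≤ 1 := by linarith
  calc _ ≤ 2 ^ (2 * U) * (2 ^ (30 * U) * (2 ^ (65 * U) * (2 ^ (37 * U) * (2 ^ U * |η|) +
          2 ^ U * (2 ^ (37 * U)) ^ 2 / 2 ^ (1400 * U)))) * 2 ^ (1165 * U) := by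
        gcongr
        · exact natCast_mul_natCast_le_two_pow hU
        · exact eight_mul_pow_le_two_pow hk
    _ = 2 ^ (1300 * U) * |η| + 2 ^ (1337 * U) / 2 ^ (1400 * U) := by
        ring
    _ ≤ 1 + 1 := by
        gcongr
        exact div_le_one_of_le₀ (pow_le_pow_right₀ one_le_two (by lia)) (by positivity)
    _ = 2 := one_add_one_eq_two

theorem exists_auxValue_mul_le_one (hS : 0 < S) (hU : U = 10 ^ 5 * S) (hk : k ≤ 2 ^ 62) {η : ℝ}
    (hk0 : 0 < k) (hx : 0 < x) (hΛ : |k * Real.log x| ≤ 25) (hη : |η| * 2 ^ (1300 * U) ≤ 1) :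
    ∃ p : Fin U × Fin (10 ^ 5) → ℤ, p ≠ 0 ∧ (∀ z, |(p z : ℝ)| ≤ 2 ^ (30 * U)) ∧
      ∀ r < k, ∀ s < S, |auxValue p x (x ^ k * (1 + η)) k r s| * 2 ^ (1164 * U) ≤ 1 := by
  obtain ⟨p, hp0, hp, hpsum⟩ := exists_coeffNorm_sum_mul_le_one hS hU hk0 hk hΛ
  refine ⟨p, hp0, hp, fun r hr s hs => ?_⟩
  have hη1 : |η| ≤ 1 := (le_mul_of_one_le_right (abs_nonneg η) (one_le_pow₀ one_le_two)).trans hη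
  have hval := abs_auxValue_le hp hx hη1 hr hs (by lia) (mul_abs_mul_le hU hΛ)
    (T := 1400 * U) (by push_cast; linarith [U.cast_nonneg (α := ℝ)])
  rw [show S * 10 ^ 5 = U by lia] at hval
  have herr := mul_exp_mul_add_mul_le (by lia) hk hη
  have hsum : coeffNorm (S : ℝ) (∑ z, C (p z : ℝ) * approxTerm (1400 * U) x k z) *
      2 ^ (1165 * U) ≤ 1 :=
    (mul_le_mul_of_nonneg_left (pow_le_pow_right₀ one_le_two (by lia))
      (coeffNorm_nonneg S.cast_nonneg _)).trans hpsum
  have hthree : |auxValue p x (x ^ k * (1 + η)) k r s| * 2 ^ (1164 * U) * 2 ^ U ≤ 3 := by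
    have := mul_le_mul_of_nonneg_right hval (by positivity : (0 : ℝ) ≤ 2 ^ (1165 * U))
    rw [mul_assoc, ← pow_add, show 1164 * U + U = 1165 * U by lia]
    linarith
  have hfour : (2 : ℝ) ^ 2 ≤ 2 ^ U := pow_le_pow_right₀ one_le_two (by lia)
  nlinarith

variable {A : ℕ}

theorem conjugate_bound_le_two_pow (hA : 0 < A) (hS : S = 10 ^ 8 * A) (hU : U = 10 ^ 5 * S)
    (hk : k ≤ 2 ^ 62) :
    (U * (10 ^ 5 : ℕ) * (2 ^ (30 * U) * ((8 * k) ^ U *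
      ((2 ^ A) ^ ((10 ^ 10 + 10 ^ 5) * 10 ^ 5) * (2 ^ 34) ^ (S * 10 ^ 5)))) : ℝ) ≤
        2 ^ (232 * U) :=
  calc _ ≤ (2 ^ (2 * U) * (2 ^ (30 * U) * (2 ^ (65 * U) *
        ((2 ^ A) ^ ((10 ^ 10 + 10 ^ 5) * 10 ^ 5) * (2 ^ 34) ^ (S * 10 ^ 5)))) : ℝ) := by
        gcongr
        · exact natCast_mul_natCast_le_two_pow (by lia)
        · exact eight_mul_pow_le_two_pow hk
    _ ≤ 2 ^ (232 * U) := by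
        simp only [← pow_add, ← pow_mul]
        exact pow_le_pow_right₀ one_le_two (by lia)

variable {F : Type*} [Field F] [NumberField F] {ξ y : F} {d : ℕ}

theorem auxValue_eq_zero (hF : Module.finrank ℚ F ≤ 6) (ι : F →ₐ[ℚ] ℝ) (hS : S = 10 ^ 8 * A)
    (hU : U = 10 ^ 5 * S) (hk : k ≤ 2 ^ 62) (hξ : IsIntegral ℤ ξ) (hy : IsIntegral ℤ (d * y))
    (hd0 : d ≠ 0) (hd : d ≤ 8) (hX : ∀ σ : F →ₐ[ℚ] ℂ, ‖σ ξ‖ ≤ 2 ^ A)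
    (hY : ∀ σ : F →ₐ[ℚ] ℂ, ‖σ (d * y)‖ ≤ 2 ^ 34) {p : Fin U × Fin (10 ^ 5) → ℤ}
    (hp : ∀ z, |(p z : ℝ)| ≤ 2 ^ (30 * U)) {r s : ℕ} (hrk : r < k) (hr : r ≤ 10 ^ 10 + 10 ^ 5)
    (hs : s < S) (hsmall : |auxValue p (ι ξ) (ι y) k r s| * 2 ^ (1164 * U) ≤ 1) :
    auxValue p ξ y k r s = 0 := by
  by_contra hne
  have hd : (d : ℝ) ≤ 2 ^ 3 := by norm_num; exact_mod_cast hd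
  have hL := one_le_norm_auxValue_mul hξ hy hp (choose_add_mul_le_pow hrk hs (by lia))
    (one_le_pow₀ one_le_two) (one_le_pow₀ one_le_two)
    (hd.trans (pow_le_pow_right₀ one_le_two (by norm_num))) hX hY hd0 hr hs.le hne
    ((Complex.ofRealAm.restrictScalars ℚ).comp ι)
  have hnorm : ‖auxValue p (ι ξ : ℂ) (ι y : ℂ) k r s‖ = |auxValue p (ι ξ) (ι y) k r s| := by
    rw [← Real.norm_eq_abs, ← Complex.norm_real]
    exact congrArg _ (map_auxValue Complex.ofRealHom p _ _ k r s).symm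
  have hden : (d : ℝ) ^ (S * 10 ^ 5) ≤ 2 ^ (3 * U) := by
    rw [show S * 10 ^ 5 = U by lia, pow_mul]
    gcongr
  have hone : 1 ≤ 2 ^ (1163 * U) * |auxValue p (ι ξ) (ι y) k r s| :=
    calc (1 : ℝ) ≤ d ^ (S * 10 ^ 5) * |auxValue p (ι ξ) (ι y) k r s| *
          (U * (10 ^ 5 : ℕ) * (2 ^ (30 * U) * ((8 * k) ^ U *
            ((2 ^ A) ^ ((10 ^ 10 + 10 ^ 5) * 10 ^ 5) * (2 ^ 34) ^ (S * 10 ^ 5))))) ^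
              (Module.finrank ℚ F - 1) := hnorm ▸ hL
      _ ≤ 2 ^ (3 * U) * |auxValue p (ι ξ) (ι y) k r s| *
            (2 ^ (232 * U)) ^ (Module.finrank ℚ F - 1) := by
          gcongr
          exact conjugate_bound_le_two_pow (by lia) hS hU hk
      _ ≤ 2 ^ (3 * U) * |auxValue p (ι ξ) (ι y) k r s| * (2 ^ (232 * U)) ^ 5 := by
          gcongr
          · exact one_le_pow₀ one_le_two
          · lia
      _ = 2 ^ (1163 * U) * |auxValue p (ι ξ) (ι y) k r s| := by ring
  have htwo : (1 : ℝ) < 2 ^ U := one_lt_pow₀ one_lt_two (by lia)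
  rw [show 1164 * U = U + 1163 * U by lia, pow_add] at hsmall
  nlinarith

theorem one_lt_abs_div_sub_one_mul (hF : Module.finrank ℚ F ≤ 6) (ι : F →ₐ[ℚ] ℝ)
    (hA : 0 < A) (hU : U = 10 ^ 13 * A) (hk0 : 10 ^ 11 ≤ k) (hk : k ≤ 2 ^ 62) (hξ0 : 0 < ι ξ)
    (hξinj : Function.Injective fun n : ℕ => ξ ^ n) (hy0 : y ≠ 0)
    (hΛ : |k * Real.log (ι ξ)| ≤ 25) (hξ : IsIntegral ℤ ξ) (hy : IsIntegral ℤ (d * y))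
    (hd0 : d ≠ 0) (hd : d ≤ 8) (hX : ∀ σ : F →ₐ[ℚ] ℂ, ‖σ ξ‖ ≤ 2 ^ A)
    (hY : ∀ σ : F →ₐ[ℚ] ℂ, ‖σ (d * y)‖ ≤ 2 ^ 34) :
    1 < |ι y / ι ξ ^ k - 1| * 2 ^ (1300 * U) := by
  by_contra! hη
  obtain ⟨S, hS⟩ : ∃ S, S = 10 ^ 8 * A := ⟨_, rfl⟩
  have hUS : U = 10 ^ 5 * S := by lia
  obtain ⟨p, hp0, hp, hsmall⟩ := exists_auxValue_mul_le_one (by lia) hUS hk (by lia) hξ0 hΛ hη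
  rw [add_sub_cancel, mul_div_cancel₀ _ (by positivity)] at hsmall
  have hzero : 10 ^ 10 * S ≤ 10 ^ 5 * (U - 1) :=
    mul_le_of_forall_auxValue_eq_zero hp0 hξinj (ne_zero_of_map hξ0.ne') hy0 (by lia)
      fun r hr s hs => auxValue_eq_zero hF ι hS hUS hk hξ hy hd0 hd hX hY hp (by lia) hr.le hs
        (hsmall r (by lia) s hs)
  lia

end LowerBound

section Roots

open Real goldenRatio

theorem sqrt_five_eq : √5 = 2 * φ - 1 := by
  linear_combination goldenRatio_add_goldenConj - goldenRatio_sub_goldenConj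

theorem inv_eq_of_sq_eq {F : Type*} [Field F] {x : F} (hx : x ^ 2 = x + 1) : x⁻¹ = x - 1 :=
  inv_eq_of_mul_eq_one_right (by linear_combination hx)

theorem inv_eq_of_cube_eq {F : Type*} [Field F] {x : F} (hx : x ^ 3 = x ^ 2 + x + 1) :
    x⁻¹ = x ^ 2 - x - 1 :=
  inv_eq_of_mul_eq_one_right (by linear_combination hx)

section Integral

open Polynomial

variable {F : Type*} [Field F] {x : F}

theorem isIntegral_of_sq_eq (hx : x ^ 2 = x + 1) : IsIntegral ℤ x :=
  ⟨X ^ 2 - X - 1, by monicity!, by simp [hx]⟩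

theorem isIntegral_of_cube_eq (hx : x ^ 3 = x ^ 2 + x + 1) : IsIntegral ℤ x :=
  ⟨X ^ 3 - X ^ 2 - X - 1, by monicity!, by simp [hx, add_assoc]⟩

theorem isIntegral_inv_of_sq_eq (hx : x ^ 2 = x + 1) : IsIntegral ℤ x⁻¹ :=
  inv_eq_of_sq_eq hx ▸ (isIntegral_of_sq_eq hx).sub isIntegral_one

theorem isIntegral_inv_of_cube_eq (hx : x ^ 3 = x ^ 2 + x + 1) : IsIntegral ℤ x⁻¹ :=
  have hxi := isIntegral_of_cube_eq hx
  inv_eq_of_cube_eq hx ▸ ((hxi.pow 2).sub hxi).sub isIntegral_one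

theorem isIntegral_zpow (h : IsIntegral ℤ x) (hinv : IsIntegral ℤ x⁻¹) (n : ℤ) :
    IsIntegral ℤ (x ^ n) := by
  obtain ⟨m, rfl | rfl⟩ := n.eq_nat_or_neg
  · simpa using h.pow m
  · simpa using hinv.pow m

end Integral

section Norm

variable {𝕜 : Type*} [NormedField 𝕜] {x : 𝕜}

theorem le_two_of_cube_le {u : ℝ} (h : u ^ 3 ≤ u ^ 2 + u + 1) : u ≤ 2 := by
  by_contra! hu
  nlinarith [pow_pos (sub_pos.2 hu) 2, pow_pos (sub_pos.2 hu) 3]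

theorem norm_le_two_of_cube_eq (hx : x ^ 3 = x ^ 2 + x + 1) : ‖x‖ ≤ 2 := by
  refine le_two_of_cube_le ?_
  rw [← norm_pow, hx, ← norm_pow]
  exact norm_add₃_le.trans_eq (by rw [norm_one])

theorem norm_inv_le_two_of_cube_eq (hx : x ^ 3 = x ^ 2 + x + 1) : ‖x⁻¹‖ ≤ 2 := by
  refine le_two_of_cube_le ?_
  have hx0 : x ≠ 0 := by rintro rfl; simp at hx
  have hinv : x⁻¹ ^ 3 = -x⁻¹ ^ 2 + -x⁻¹ + 1 := by field_simp; linear_combination -hx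
  rw [← norm_pow, hinv, ← norm_pow]
  exact norm_add₃_le.trans_eq (by rw [norm_neg, norm_neg, norm_one])

theorem norm_le_two_of_sq_eq (hx : x ^ 2 = x + 1) : ‖x‖ ≤ 2 := by
  have h := norm_add_le x 1
  rw [← hx, norm_pow, norm_one] at h
  nlinarith

theorem norm_inv_le_two_of_sq_eq (hx : x ^ 2 = x + 1) : ‖x⁻¹‖ ≤ 2 := by
  have hinv : x⁻¹ ^ 2 = 1 - x⁻¹ := by rw [inv_eq_of_sq_eq hx]; linear_combination hx
  have h := norm_sub_le 1 x⁻¹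
  rw [← hinv, norm_pow, norm_one] at h
  nlinarith

theorem norm_zpow_le_two_pow (h : ‖x‖ ≤ 2) (hinv : ‖x⁻¹‖ ≤ 2) {n : ℤ} {N : ℕ} (hn : |n| ≤ N) :
    ‖x ^ n‖ ≤ 2 ^ N := by
  have hpow {y : 𝕜} (hy : ‖y‖ ≤ 2) {m : ℕ} (hm : m ≤ N) : ‖y ^ m‖ ≤ 2 ^ N := by
    rw [norm_pow]
    exact (pow_le_pow_left₀ (norm_nonneg y) hy m).trans (pow_le_pow_right₀ one_le_two hm)
  obtain ⟨m, rfl | rfl⟩ := n.eq_nat_or_neg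
  · rw [zpow_natCast]
    exact hpow h (by simpa using hn)
  · rw [zpow_neg, zpow_natCast, ← inv_pow]
    exact hpow hinv (by simpa using hn)

end Norm

section Degree

open Polynomial IntermediateField

theorem irreducible_X_pow_three_sub : Irreducible (X ^ 3 - X ^ 2 - X - 1 : ℚ[X]) := by
  have hmonic : (X ^ 3 - X ^ 2 - X - 1 : ℚ[X]).Monic := by monicity!
  have hdeg : (X ^ 3 - X ^ 2 - X - 1 : ℚ[X]).natDegree = 3 := by compute_degree!
  rw [hmonic.irreducible_iff_roots_eq_zero_of_degree_le_three (by lia) (by lia),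
    Multiset.eq_zero_iff_forall_notMem]
  intro r hr
  rw [mem_roots hmonic.ne_zero, IsRoot.def] at hr
  simp only [eval_sub, eval_pow, eval_X, eval_one] at hr
  obtain ⟨z, rfl⟩ := IsIntegrallyClosed.isIntegral_iff.1
    (isIntegral_of_cube_eq (by linear_combination hr))
  have hz : z ^ 3 - z ^ 2 - z - 1 = 0 := by simpa [← Int.cast_inj (α := ℚ)] using hr
  have hdvd : z ∣ 1 := ⟨z ^ 2 - z - 1, by linear_combination -hz⟩
  rcases Int.isUnit_iff.1 (isUnit_of_dvd_one hdvd) with rfl | rfl <;> norm_num at hz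

theorem finrank_adjoin_goldenRatio_le : Module.finrank ℚ ℚ⟮φ⟯ ≤ 2 := by
  have hmonic : (X ^ 2 - X - 1 : ℚ[X]).Monic := by monicity!
  have hdeg : (X ^ 2 - X - 1 : ℚ[X]).natDegree = 2 := by compute_degree!
  rw [adjoin.finrank (isIntegral_of_sq_eq goldenRatio_sq).tower_top, ← hdeg]
  exact natDegree_le_of_dvd (minpoly.dvd _ _ (by simp)) hmonic.ne_zero

variable {α : ℝ}

theorem finrank_adjoin_of_cube_eq (hα : α ^ 3 = α ^ 2 + α + 1) :
    Module.finrank ℚ ℚ⟮α⟯ = 3 := by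
  have hmonic : (X ^ 3 - X ^ 2 - X - 1 : ℚ[X]).Monic := by monicity!
  have hdeg : (X ^ 3 - X ^ 2 - X - 1 : ℚ[X]).natDegree = 3 := by compute_degree!
  rw [adjoin.finrank (isIntegral_of_cube_eq hα).tower_top, ← minpoly.eq_of_irreducible_of_monic
    irreducible_X_pow_three_sub (by simp [hα, add_assoc]) hmonic, hdeg]

theorem irrational_goldenRatio_pow {a : ℕ} (ha : a ≠ 0) : Irrational (φ ^ a) := by
  obtain ⟨b, rfl⟩ := Nat.exists_eq_succ_of_ne_zero ha
  rw [Nat.succ_eq_add_one, ← goldenRatio_mul_fib_succ_add_fib]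
  exact (goldenRatio_irrational.mul_natCast (Nat.fib_pos.2 b.succ_pos).ne').add_natCast _

theorem goldenRatio_pow_ne_pow (hα : α ^ 3 = α ^ 2 + α + 1) {a : ℕ} (ha : a ≠ 0) (b : ℕ) :
    φ ^ a ≠ α ^ b := by
  intro h
  have : FiniteDimensional ℚ ℚ⟮φ⟯ :=
    adjoin.finiteDimensional (isIntegral_of_sq_eq goldenRatio_sq).tower_top
  have hcoprime : (Module.finrank ℚ ℚ⟮φ⟯).Coprime (Module.finrank ℚ ℚ⟮α⟯) := by
    rw [finrank_adjoin_of_cube_eq hα]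
    exact (Nat.coprime_of_lt_prime Module.finrank_pos.ne'
      (finrank_adjoin_goldenRatio_le.trans_lt (by norm_num)) Nat.prime_three).symm
  have hmem : φ ^ a ∈ (⊥ : IntermediateField ℚ ℝ) := by
    rw [← (LinearDisjoint.of_finrank_coprime hcoprime).inf_eq_bot]
    exact ⟨pow_mem (mem_adjoin_simple_self ℚ φ) a,
      h ▸ pow_mem (mem_adjoin_simple_self ℚ α) b⟩
  obtain ⟨q, hq⟩ := mem_bot.1 hmem
  exact irrational_goldenRatio_pow ha ⟨q, hq⟩

end Degree

end Roots

section BinetRatio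

open Real goldenRatio

/-- The ratio of the leading terms `f ^ n / (2 * f - 1)` and `t ^ (m + 1) / (3 * t ^ 2 - 2 * t - 1)`
in Binet's formulas for the Fibonacci and Tribonacci numbers, where `f` and `t` are roots of
`X ^ 2 - X - 1` and `X ^ 3 - X ^ 2 - X - 1`. -/
def binetRatio {F : Type*} [Field F] (f t : F) (n m : ℤ) : F :=
  f ^ n * t ^ (-(m + 1)) * (3 * t ^ 2 - 2 * t - 1) / (2 * f - 1)

section Field

variable {F : Type*} [Field F] {f t : F}

theorem map_binetRatio {F' : Type*} [Field F'] (σ : F →+* F') (f t : F) (n m : ℤ) :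
    σ (binetRatio f t n m) = binetRatio (σ f) (σ t) n m := by
  simp [binetRatio, map_ofNat]

theorem binetRatio_add_mul (hf : f ≠ 0) (ht : t ≠ 0) (n m : ℤ) (k a b : ℕ) :
    binetRatio f t (n + k * a) (m + k * b) = binetRatio f t n m / (f⁻¹ ^ a * t ^ b) ^ k := by
  have hfk : f ^ (n + k * a) = f ^ n * (f ^ a) ^ k := by
    rw [zpow_add₀ hf, ← pow_mul']
    exact_mod_cast rfl
  have htk : t ^ (-(m + k * b + 1)) = t ^ (-(m + 1)) * ((t ^ b) ^ k)⁻¹ := by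
    rw [add_right_comm, neg_add, zpow_add₀ ht, ← pow_mul', zpow_neg t (k * b)]
    exact_mod_cast rfl
  rw [binetRatio, binetRatio, hfk, htk, mul_pow, inv_pow, inv_pow]
  field_simp

variable [CharZero F]

theorem two_mul_sub_one_ne_zero (hf : f ^ 2 = f + 1) : 2 * f - 1 ≠ 0 := by
  intro h
  exact OfNat.ofNat_ne_zero (R := F) 5 (by linear_combination (2 * f - 1) * h - 4 * hf)

theorem five_mul_binetRatio (hf : f ^ 2 = f + 1) (t : F) (n m : ℤ) :
    5 * binetRatio f t n m =
      (2 * f - 1) * f ^ n * t ^ (-(m + 1)) * (3 * t ^ 2 - 2 * t - 1) := by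
  have h := two_mul_sub_one_ne_zero hf
  rw [binetRatio, mul_div_assoc', div_eq_iff h]
  linear_combination (-4 * f ^ n * t ^ (-(m + 1)) * (3 * t ^ 2 - 2 * t - 1)) * hf

theorem isIntegral_five_mul_binetRatio (hf : f ^ 2 = f + 1) (ht : t ^ 3 = t ^ 2 + t + 1)
    (n m : ℤ) : IsIntegral ℤ (5 * binetRatio f t n m) := by
  have hfi := isIntegral_of_sq_eq hf
  have hti := isIntegral_of_cube_eq ht
  have hfinv := isIntegral_inv_of_sq_eq hf
  have htinv := isIntegral_inv_of_cube_eq ht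
  have htwo : IsIntegral ℤ (2 : F) := isIntegral_natCast 2
  have hthree : IsIntegral ℤ (3 : F) := isIntegral_natCast 3
  rw [five_mul_binetRatio hf]
  exact ((((htwo.mul hfi).sub isIntegral_one).mul (isIntegral_zpow hfi hfinv _)).mul
    (isIntegral_zpow hti htinv _)).mul
      (((hthree.mul (hti.pow 2)).sub (htwo.mul hti)).sub isIntegral_one)

end Field

theorem norm_five_mul_binetRatio_le {𝕜 : Type*} [RCLike 𝕜] {f t : 𝕜} (hf : f ^ 2 = f + 1)
    (ht : t ^ 3 = t ^ 2 + t + 1) {n m : ℤ} (hn : |n| ≤ 12) (hm : |m| ≤ 13) :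
    ‖5 * binetRatio f t n m‖ ≤ 2 ^ 34 := by
  have hf2 := norm_le_two_of_sq_eq hf
  have ht2 := norm_le_two_of_cube_eq ht
  have hfn : ‖f ^ n‖ ≤ 2 ^ 12 := norm_zpow_le_two_pow hf2 (norm_inv_le_two_of_sq_eq hf) hn
  have htm : ‖t ^ (-(m + 1))‖ ≤ 2 ^ 14 := by
    refine norm_zpow_le_two_pow ht2 (norm_inv_le_two_of_cube_eq ht) ?_
    rw [abs_neg]
    exact (abs_add_le m 1).trans (by norm_num; lia)
  have hf5 : ‖2 * f - 1‖ ≤ 5 := by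
    refine (norm_sub_le _ _).trans ?_
    rw [norm_mul, RCLike.norm_ofNat, norm_one]
    linarith
  have ht17 : ‖3 * t ^ 2 - 2 * t - 1‖ ≤ 17 := by
    refine (norm_sub_le _ _).trans ((add_le_add_left (norm_sub_le _ _) _).trans ?_)
    rw [norm_mul, norm_mul, norm_pow, RCLike.norm_ofNat, RCLike.norm_ofNat, norm_one]
    nlinarith [norm_nonneg t]
  rw [five_mul_binetRatio hf]
  simp only [norm_mul] at hf5 ⊢
  calc _ ≤ (5 : ℝ) * 2 ^ 12 * 2 ^ 14 * 17 := by gcongr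
    _ ≤ 2 ^ 34 := by norm_num

variable {α : ℝ}

theorem mem_Ioo_of_cube_eq (hα : α ^ 3 = α ^ 2 + α + 1) : α ∈ Set.Ioo (9 / 5) (19 / 10) := by
  constructor <;> nlinarith [sq_nonneg (α - 1), sq_nonneg (α + 1)]

theorem norm_inv_binetRatio_le (hα : α ^ 3 = α ^ 2 + α + 1) {n m : ℤ} (hn : |n| ≤ 12)
    (hm : |m| ≤ 13) : ‖(binetRatio φ α n m)⁻¹‖ ≤ 2 ^ 26 := by
  have hφn : ‖φ ^ (-n)‖ ≤ 2 ^ 12 :=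
    norm_zpow_le_two_pow (norm_le_two_of_sq_eq goldenRatio_sq)
      (norm_inv_le_two_of_sq_eq goldenRatio_sq) (by rwa [abs_neg])
  have hαm : ‖α ^ (m + 1)‖ ≤ 2 ^ 14 :=
    norm_zpow_le_two_pow (norm_le_two_of_cube_eq hα) (norm_inv_le_two_of_cube_eq hα)
      ((abs_add_le m 1).trans (by norm_num; lia))
  have hquot : ‖(2 * φ - 1) / (3 * α ^ 2 - 2 * α - 1)‖ ≤ 1 := by
    have hφ := one_lt_goldenRatio
    have hα := (mem_Ioo_of_cube_eq hα).1
    rw [norm_of_nonneg (div_nonneg (by linarith) (by nlinarith))]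
    exact div_le_one_of_le₀ (by nlinarith [goldenRatio_lt_two]) (by nlinarith)
  have hinv : (binetRatio φ α n m)⁻¹ =
      φ ^ (-n) * α ^ (m + 1) * ((2 * φ - 1) / (3 * α ^ 2 - 2 * α - 1)) := by
    rw [binetRatio, zpow_neg, zpow_neg]
    field_simp
  rw [hinv, norm_mul, norm_mul]
  calc _ ≤ (2 : ℝ) ^ 12 * 2 ^ 14 * 1 := by gcongr
    _ = 2 ^ 26 := by norm_num

theorem abs_mul_log_le (hα : α ^ 3 = α ^ 2 + α + 1) {n m : ℤ} (hn : |n| ≤ 12) (hm : |m| ≤ 13)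
    {x : ℝ} (hx : 0 < x) {k : ℕ} (h : |binetRatio φ α n m / x ^ k - 1| ≤ 1 / 4) :
    |k * log x| ≤ 25 := by
  obtain ⟨hlow, hup⟩ := abs_le.1 h
  have hxk : 0 < x ^ k := pow_pos hx k
  have hle := (le_abs_self _).trans (norm_five_mul_binetRatio_le goldenRatio_sq hα hn hm)
  have hinv := (le_abs_self _).trans (norm_inv_binetRatio_le hα hn hm)
  have hratio := div_mul_cancel₀ (binetRatio φ α n m) hxk.ne'
  have hpos : 0 < binetRatio φ α n m := by nlinarith
  rw [inv_le_iff_one_le_mul₀ hpos] at hinv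
  have hpow_le : x ^ k ≤ 2 ^ 33 := by nlinarith
  have hle_pow : (2 ^ 33)⁻¹ ≤ x ^ k := by
    rw [inv_le_iff_one_le_mul₀ (by positivity)]
    nlinarith
  have hlog_two := log_two_lt_d9
  have hlog_le := log_le_log hxk hpow_le
  have hle_log := log_le_log (by positivity) hle_pow
  rw [log_pow, log_pow] at hlog_le
  rw [log_inv, log_pow, log_pow] at hle_log
  push_cast at hlog_le hle_log
  exact abs_le.2 ⟨by linarith, by linarith⟩

theorem inv_pow_mul_pow_ne_one (hα : α ^ 3 = α ^ 2 + α + 1) {a : ℕ} (ha : a ≠ 0) (b : ℕ) :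
    φ⁻¹ ^ a * α ^ b ≠ 1 := by
  rw [inv_pow, ne_eq, inv_mul_eq_one₀ (pow_ne_zero a goldenRatio_ne_zero)]
  exact goldenRatio_pow_ne_pow hα ha b

theorem norm_map_inv_pow_mul_pow_le {F 𝕜 : Type*} [Field F] [NormedField 𝕜] {f t : F}
    (hf : f ^ 2 = f + 1) (ht : t ^ 3 = t ^ 2 + t + 1) (σ : F →+* 𝕜) (a b : ℕ) :
    ‖σ (f⁻¹ ^ a * t ^ b)‖ ≤ 2 ^ (a + b) := by
  have hσf : σ f ^ 2 = σ f + 1 := by simp [← map_pow, hf]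
  have hσt : σ t ^ 3 = σ t ^ 2 + σ t + 1 := by simp [← map_pow, ht]
  rw [map_mul, map_pow, map_pow, map_inv₀, norm_mul, norm_pow, norm_pow, pow_add]
  have := norm_inv_le_two_of_sq_eq hσf
  have := norm_le_two_of_cube_eq hσt
  gcongr

theorem norm_map_five_mul_binetRatio_le {F 𝕜 : Type*} [Field F] [RCLike 𝕜] {f t : F}
    (hf : f ^ 2 = f + 1) (ht : t ^ 3 = t ^ 2 + t + 1) (σ : F →+* 𝕜) {n m : ℤ}
    (hn : |n| ≤ 12) (hm : |m| ≤ 13) : ‖σ (5 * binetRatio f t n m)‖ ≤ 2 ^ 34 := by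
  rw [map_mul, map_binetRatio, map_ofNat]
  exact norm_five_mul_binetRatio_le (by simp [← map_pow, hf]) (by simp [← map_pow, ht]) hn hm

theorem injective_inv_pow_mul_pow {F : Type*} [Field F] {f t : F} (ι : F →+* ℝ)
    (hιf : ι f = φ) (hιt : ι t ^ 3 = ι t ^ 2 + ι t + 1) {a : ℕ} (ha : a ≠ 0) (b : ℕ) :
    Function.Injective fun k : ℕ => (f⁻¹ ^ a * t ^ b) ^ k := by
  have hιt0 : 0 < ι t := by linarith [(mem_Ioo_of_cube_eq hιt).1]
  refine Function.Injective.of_comp (f := ι) ?_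
  simp only [Function.comp_def, map_mul, map_pow, map_inv₀, hιf]
  exact pow_right_injective₀ (by positivity) (inv_pow_mul_pow_ne_one hιt ha b)

theorem one_lt_abs_map_binetRatio_sub_one_mul {F : Type*} [Field F] [NumberField F]
    (hF : Module.finrank ℚ F ≤ 6) (ι : F →ₐ[ℚ] ℝ) {f t : F} (hf : f ^ 2 = f + 1)
    (ht : t ^ 3 = t ^ 2 + t + 1) (hιf : ι f = φ) {n m : ℤ} (hn : |n| ≤ 12) (hm : |m| ≤ 13)
    {k a b : ℕ} (hk0 : 10 ^ 11 ≤ k) (hk : k ≤ 2 ^ 62) (ha : a ≠ 0) :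
    1 < |binetRatio φ (ι t) (n + k * a) (m + k * b) - 1| *
      2 ^ (1300 * (10 ^ 13 * (a + b))) := by
  have hιt : ι t ^ 3 = ι t ^ 2 + ι t + 1 := by simp [← map_pow, ht]
  have hιt0 : 0 < ι t := by linarith [(mem_Ioo_of_cube_eq hιt).1]
  have hι_pow : ι (f⁻¹ ^ a * t ^ b) = φ⁻¹ ^ a * ι t ^ b := by
    rw [map_mul, map_pow, map_pow, map_inv₀, hιf]
  have hpos : 0 < φ⁻¹ ^ a * ι t ^ b := by have := goldenRatio_pos; positivity
  have hι_ratio : ι (binetRatio f t n m) = binetRatio φ (ι t) n m :=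
    hιf ▸ map_binetRatio (ι : F →+* ℝ) f t n m
  by_contra! h
  have hsmall : |binetRatio φ (ι t) (n + k * a) (m + k * b) - 1| ≤ 1 / 4 := by
    have hfour : (2 : ℝ) ^ 2 ≤ 2 ^ (1300 * (10 ^ 13 * (a + b))) :=
      pow_le_pow_right₀ one_le_two (by lia)
    nlinarith [abs_nonneg (binetRatio φ (ι t) (n + k * a) (m + k * b) - 1)]
  rw [binetRatio_add_mul goldenRatio_ne_zero hιt0.ne'] at h hsmall
  have hratio_ne : binetRatio f t n m ≠ 0 := by
    intro h0
    rw [← hι_ratio, h0, map_zero, zero_div] at hsmall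
    norm_num at hsmall
  refine h.not_gt ?_
  rw [← hι_pow, ← hι_ratio]
  refine one_lt_abs_div_sub_one_mul (A := a + b) (d := 5) hF ι (by lia) rfl hk0 hk
    (hι_pow ▸ hpos) (injective_inv_pow_mul_pow (ι : F →+* ℝ) hιf hιt ha b) hratio_ne
    (hι_pow ▸ abs_mul_log_le hιt hn hm hpos hsmall)
    (((isIntegral_inv_of_sq_eq hf).pow a).mul ((isIntegral_of_cube_eq ht).pow b))
    (isIntegral_five_mul_binetRatio hf ht n m) (by norm_num) (by norm_num)
    (fun σ => norm_map_inv_pow_mul_pow_le hf ht (σ : F →+* ℂ) a b)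
    fun σ => norm_map_five_mul_binetRatio_le hf ht (σ : F →+* ℂ) hn hm

open IntermediateField in
theorem one_lt_abs_binetRatio_sub_one_mul (hα : α ^ 3 = α ^ 2 + α + 1) {n m : ℤ}
    (hn : |n| ≤ 12) (hm : |m| ≤ 13) {k a b : ℕ} (hk0 : 10 ^ 11 ≤ k) (hk : k ≤ 2 ^ 62)
    (ha : a ≠ 0) :
    1 < |binetRatio φ α (n + k * a) (m + k * b) - 1| * 2 ^ (1300 * (10 ^ 13 * (a + b))) := by
  have : FiniteDimensional ℚ ℚ⟮φ⟯ :=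
    adjoin.finiteDimensional (isIntegral_of_sq_eq goldenRatio_sq).tower_top
  have : FiniteDimensional ℚ ℚ⟮α⟯ :=
    adjoin.finiteDimensional (isIntegral_of_cube_eq hα).tower_top
  let F : IntermediateField ℚ ℝ := ℚ⟮φ⟯ ⊔ ℚ⟮α⟯
  have : FiniteDimensional ℚ F := IntermediateField.finiteDimensional_sup _ _
  have : NumberField F := ⟨⟩
  have hF : Module.finrank ℚ F ≤ 6 := by
    refine (finrank_sup_le _ _).trans ?_
    rw [finrank_adjoin_of_cube_eq hα]
    linarith [finrank_adjoin_goldenRatio_le]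
  let f : F := ⟨φ, (le_sup_left : ℚ⟮φ⟯ ≤ F) (mem_adjoin_simple_self ℚ φ)⟩
  let t : F := ⟨α, (le_sup_right : ℚ⟮α⟯ ≤ F) (mem_adjoin_simple_self ℚ α)⟩
  exact one_lt_abs_map_binetRatio_sub_one_mul hF F.val (f := f) (t := t)
    (Subtype.ext goldenRatio_sq) (Subtype.ext hα) rfl hn hm hk0 hk ha

end BinetRatio

section Solutions

open Real goldenRatio

theorem exists_cube_eq : ∃ α : ℝ, α ^ 3 = α ^ 2 + α + 1 := by
  have hcont : ContinuousOn (fun x : ℝ => x ^ 3 - (x ^ 2 + x + 1)) (Set.Icc 0 2) := by fun_prop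
  obtain ⟨α, -, hα⟩ := intermediate_value_Icc zero_le_two hcont
    (show (0 : ℝ) ∈ Set.Icc _ _ by norm_num)
  exact ⟨α, sub_eq_zero.1 hα⟩

theorem trib_add_mul_trib_add_mul_trib {R : Type*} [CommRing R] {t : R}
    (ht : t ^ 3 = t ^ 2 + t + 1) (m : ℕ) :
    (trib (m + 2) : R) + (t - 1) * trib (m + 1) + (t ^ 2 - t - 1) * trib m = t ^ (m + 1) := by
  induction m with
  | zero => simp [trib]
  | succ m ih =>
    have hrec : (trib (m + 3) : R) = trib (m + 2) + trib (m + 1) + trib m := by simp [trib]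
    rw [pow_succ t (m + 1), ← ih]
    linear_combination hrec - (trib m : R) * ht

theorem trib_add_two_sub {F : Type*} [Field F] {t : F} (ht : t ^ 3 = t ^ 2 + t + 1)
    (hden : 3 * t ^ 2 - 2 * t - 1 ≠ 0) (m : ℕ) :
    trib (m + 2) - t ^ (m + 3) / (3 * t ^ 2 - 2 * t - 1) =
      -(t - 1) * (trib (m + 1) - t ^ (m + 2) / (3 * t ^ 2 - 2 * t - 1)) -
        (t ^ 2 - t - 1) * (trib m - t ^ (m + 1) / (3 * t ^ 2 - 2 * t - 1)) := by
  have hlead : t ^ (m + 3) / (3 * t ^ 2 - 2 * t - 1) +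
      (t - 1) * (t ^ (m + 2) / (3 * t ^ 2 - 2 * t - 1)) +
        (t ^ 2 - t - 1) * (t ^ (m + 1) / (3 * t ^ 2 - 2 * t - 1)) = t ^ (m + 1) := by
    rw [← mul_div_assoc, ← mul_div_assoc, ← add_div, ← add_div, div_eq_iff hden]
    ring
  linear_combination trib_add_mul_trib_add_mul_trib ht m - hlead

theorem abs_trib_sub_le {α : ℝ} (hα : α ^ 3 = α ^ 2 + α + 1) (m : ℕ) :
    |trib m - α ^ (m + 1) / (3 * α ^ 2 - 2 * α - 1)| ≤ (3 / 2) ^ m := by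
  obtain ⟨hα1, hα2⟩ := mem_Ioo_of_cube_eq hα
  have hden : 5 < 3 * α ^ 2 - 2 * α - 1 := by nlinarith
  induction m using Nat.twoStepInduction with
  | zero =>
    rw [zero_add, pow_one, trib, Int.cast_zero, zero_sub, abs_neg, pow_zero,
      abs_of_pos (by apply div_pos <;> linarith), div_le_one (by linarith)]
    linarith
  | one =>
    have hquot : α ^ 2 / (3 * α ^ 2 - 2 * α - 1) ≤ 1 := by
      rw [div_le_one (by linarith)]
      nlinarith
    have hquot_pos : 0 < α ^ 2 / (3 * α ^ 2 - 2 * α - 1) := by apply div_pos <;> nlinarith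
    rw [trib, Int.cast_one, abs_le]
    constructor <;> linarith
  | more m ih ih' =>
    have hsq : α ^ 2 - α - 1 ≤ 71 / 100 := by nlinarith
    rw [trib_add_two_sub hα (by linarith)]
    refine (abs_sub _ _).trans ?_
    rw [abs_mul, abs_mul, abs_neg, abs_of_pos (by linarith : 0 < α - 1),
      abs_of_pos (by nlinarith : 0 < α ^ 2 - α - 1)]
    calc _ ≤ 9 / 10 * (3 / 2 : ℝ) ^ (m + 1) + 71 / 100 * (3 / 2) ^ m := by gcongr; linarith
      _ ≤ (3 / 2) ^ (m + 2) := by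
        have : 0 < (3 / 2 : ℝ) ^ m := by positivity
        rw [pow_succ, pow_add]
        linarith

theorem abs_fib_sub_le (n : ℕ) : |Nat.fib n - φ ^ n / (2 * φ - 1)| ≤ 1 := by
  have hsub : (Nat.fib n : ℝ) - φ ^ n / √5 = -(ψ ^ n / √5) := by rw [coe_fib_eq]; ring
  rw [← sqrt_five_eq, hsub, abs_neg, abs_div, abs_pow, abs_of_nonneg (sqrt_nonneg 5)]
  have hψ : |ψ| ≤ 1 := abs_le.2 ⟨neg_one_lt_goldenConj.le, by linarith [goldenConj_neg]⟩
  exact div_le_one_of_le₀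
    ((pow_le_one₀ (abs_nonneg _) hψ).trans (one_le_sqrt.2 (by norm_num))) (sqrt_nonneg 5)

theorem abs_binetRatio_sub_one_le {α : ℝ} (hα : α ^ 3 = α ^ 2 + α + 1) {n m : ℕ}
    (h : (Nat.fib n : ℤ) + 5 = trib m) : |binetRatio φ α n m - 1| ≤ 35 * (5 / 6) ^ m := by
  obtain ⟨hα1, hα2⟩ := mem_Ioo_of_cube_eq hα
  have hden : 0 < 3 * α ^ 2 - 2 * α - 1 := by nlinarith
  have hlead : (9 / 5) ^ m * (1 / 5) ≤ α ^ (m + 1) / (3 * α ^ 2 - 2 * α - 1) := by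
    rw [pow_succ, mul_div_assoc]
    have hquot : 1 / 5 ≤ α / (3 * α ^ 2 - 2 * α - 1) := by
      rw [div_le_div_iff₀ (by norm_num) hden]
      nlinarith
    gcongr
  have hlead_pos : 0 < α ^ (m + 1) / (3 * α ^ 2 - 2 * α - 1) := lt_of_lt_of_le (by positivity) hlead
  have hratio : binetRatio φ α n m =
      φ ^ n / (2 * φ - 1) / (α ^ (m + 1) / (3 * α ^ 2 - 2 * α - 1)) := by
    rw [binetRatio, zpow_neg, zpow_natCast]
    norm_cast
    field_simp
  have hdiff : |φ ^ n / (2 * φ - 1) - α ^ (m + 1) / (3 * α ^ 2 - 2 * α - 1)| ≤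
      7 * (3 / 2) ^ m := by
    have hfib := abs_le.1 (abs_fib_sub_le n)
    have htrib := abs_le.1 (abs_trib_sub_le hα m)
    have hsol : (Nat.fib n : ℝ) + 5 = trib m := by exact_mod_cast h
    have hone : 1 ≤ (3 / 2 : ℝ) ^ m := one_le_pow₀ (by norm_num)
    exact abs_le.2 ⟨by linarith, by linarith⟩
  rw [hratio, div_sub_one hlead_pos.ne', abs_div, abs_of_pos hlead_pos]
  calc _ ≤ 7 * (3 / 2 : ℝ) ^ m / ((9 / 5) ^ m * (1 / 5)) := by gcongr
    _ = 35 * ((3 / 2) ^ m / (9 / 5) ^ m) := by ring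
    _ = 35 * (5 / 6) ^ m := by rw [← div_pow]; norm_num

theorem abs_binetRatio_sub_one_mul_le {α : ℝ} (hα : α ^ 3 = α ^ 2 + α + 1) {n m e : ℕ}
    (h : (Nat.fib n : ℤ) + 5 = trib m) (hm : 4 * (e + 6) ≤ m) :
    |binetRatio φ α n m - 1| * 2 ^ e ≤ 1 := by
  have hpow : (5 / 6 : ℝ) ^ m ≤ (1 / 2) ^ (e + 6) :=
    calc (5 / 6 : ℝ) ^ m ≤ (5 / 6) ^ (4 * (e + 6)) :=
          pow_le_pow_of_le_one (by norm_num) (by norm_num) hm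
      _ = ((5 / 6) ^ 4) ^ (e + 6) := pow_mul _ _ _
      _ ≤ (1 / 2) ^ (e + 6) := by gcongr; norm_num
  calc _ ≤ 35 * (1 / 2 : ℝ) ^ (e + 6) * 2 ^ e := by
        gcongr
        exact (abs_binetRatio_sub_one_le hα h).trans (mul_le_mul_of_nonneg_left hpow (by norm_num))
    _ = 35 / 64 * (1 / 2 * 2) ^ e := by rw [pow_add, mul_pow]; ring
    _ ≤ 1 := by norm_num

theorem trib_le_fib_two_mul : ∀ m : ℕ, trib m ≤ Nat.fib (2 * m)
  | 0 | 1 | 2 => by decide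
  | m + 3 => by
    have h0 := trib_le_fib_two_mul m
    have h1 := trib_le_fib_two_mul (m + 1)
    have h2 := trib_le_fib_two_mul (m + 2)
    have hfib (i : ℕ) := Nat.fib_add_two (n := 2 * m + i)
    have := hfib 0
    have := hfib 1
    have := hfib 2
    have := hfib 3
    have := hfib 4
    rw [trib]
    grind

theorem fib_le_trib : ∀ m : ℕ, (Nat.fib m : ℤ) ≤ trib m
  | 0 | 1 | 2 => by decide
  | m + 3 => by
    have h0 := fib_le_trib m
    have h1 := fib_le_trib (m + 1)
    have h2 := fib_le_trib (m + 2)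
    rw [Nat.fib_add_two, trib]
    lia

theorem lt_two_mul_of_fib_add_five_eq_trib {n m : ℕ} (h : (Nat.fib n : ℤ) + 5 = trib m) :
    n < 2 * m := by
  by_contra! hn
  have := Nat.fib_mono hn
  have := trib_le_fib_two_mul m
  lia

theorem lt_add_six_of_fib_add_five_eq_trib {n m : ℕ} (h : (Nat.fib n : ℤ) + 5 = trib m) :
    m < n + 6 := by
  by_contra! hm
  have hfib : Nat.fib (n + 6) = 5 * Nat.fib n + 8 * Nat.fib (n + 1) := by grind [Nat.fib_add_two]
  have := Nat.fib_mono hm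
  have := fib_le_trib m
  have := Nat.fib_pos.2 n.succ_pos
  lia

theorem fib_add_mul_add_five_ne_trib {n m a b k : ℕ} {n₀ m₀ : ℤ} (hn₀ : |n₀| ≤ 12)
    (hm₀ : |m₀| ≤ 13) (hk0 : 10 ^ 18 ≤ k) (hk : k ≤ 2 ^ 62) (hn : (n : ℤ) = n₀ + k * a)
    (hm : (m : ℤ) = m₀ + k * b) (ha : a ≠ 0) (hab : a ≤ 2 * b) :
    (Nat.fib n : ℤ) + 5 ≠ trib m := by
  intro h
  obtain ⟨α, hα⟩ := exists_cube_eq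
  have hm_large : 4 * (1300 * (10 ^ 13 * (a + b)) + 6) ≤ m := by
    have := Nat.mul_le_mul_right b hk0
    have := abs_le.1 hm₀
    zify at *
    lia
  have hgt := one_lt_abs_binetRatio_sub_one_mul (b := b) hα hn₀ hm₀
    (hk0.trans' (by norm_num)) hk ha
  rw [← hn, ← hm] at hgt
  exact hgt.not_ge (abs_binetRatio_sub_one_mul_le hα h hm_large)

theorem eq_of_fib_add_five_eq_trib {n m k : ℕ} {n₀ m₀ : ℤ}
    (h : (Nat.fib n : ℤ) + 5 = trib m) (hn₀ : |n₀| ≤ 12) (hm₀ : |m₀| ≤ 13) (hk0 : 10 ^ 18 ≤ k)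
    (hk : k ≤ 2 ^ 62) (hn : (k : ℤ) ∣ n - n₀) (hm : (k : ℤ) ∣ m - m₀) : n = n₀ ∧ m = m₀ := by
  obtain ⟨a, ha⟩ := hn
  obtain ⟨b, hb⟩ := hm
  have hlt := lt_two_mul_of_fib_add_five_eq_trib h
  have hlt' := lt_add_six_of_fib_add_five_eq_trib h
  have hn₀' := abs_le.1 hn₀
  have hm₀' := abs_le.1 hm₀
  have ha0 : 0 ≤ a := by by_contra!; nlinarith
  have hba : b ≤ a := by by_contra!; nlinarith
  have hab : a ≤ 2 * b := by by_contra!; nlinarith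
  lift a to ℕ using ha0
  lift b to ℕ using by lia
  by_cases ha_zero : a = 0
  · obtain rfl : b = 0 := by lia
    subst ha_zero
    constructor <;> lia
  · exact absurd h (fib_add_mul_add_five_ne_trib hn₀ hm₀ hk0 hk (b := b) (by lia) (by lia) ha_zero
      (by exact_mod_cast hab))

end Solutions

section Sieve

/-- Evaluates `f n`, by a recursion on `n` which makes the kernel reduce the argument to a numeral
before substituting it into `f`; this keeps the computation of `foldl_sieveStep_sieveSteps` fast. -/
def force {β : Type*} (n : ℕ) (f : ℕ → β) : β :=
  Nat.rec (f 0) (fun m _ => f m.succ) n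

@[simp]
theorem force_eq {β : Type*} (n : ℕ) (f : ℕ → β) : force n f = f n := by
  cases n <;> rfl

/-- The common setting for the Fibonacci (`c = 0`) and the Tribonacci sequence (`c = 1`)
modulo `q`. -/
structure IsTribLike {q : ℕ} (c : ℕ) (u : ℕ → ZMod q) : Prop where
  zero : u 0 = 0
  one : u 1 = 1
  two : u 2 = 1
  add_three : ∀ i, u (i + 3) = u (i + 2) + u (i + 1) + c * u i

theorem isTribLike_fib (q : ℕ) : IsTribLike 0 fun i => (Nat.fib i : ZMod q) where
  zero := by simp
  one := by simp
  two := by simp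
  add_three i := by
    rw [Nat.fib_add_two (n := i + 1)]
    push_cast
    ring

theorem isTribLike_trib (q : ℕ) : IsTribLike 1 fun i => (trib i : ZMod q) where
  zero := by simp [trib]
  one := by simp [trib]
  two := by simp [trib]
  add_three i := by
    rw [trib]
    push_cast
    ring

/-- The triple `a` expresses the shift of `u` by `e` through `u` and its shifts by `1` and `2`. For
a sequence with `IsTribLike c u` such triples multiply like the residues of polynomials modulo
`X ^ 3 - X ^ 2 - X - c`. -/
def IsShift {q : ℕ} (u : ℕ → ZMod q) (e : ℕ) (a : ℕ × ℕ × ℕ) : Prop :=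
  ∀ i, u (e + i) = a.1 * u i + a.2.1 * u (i + 1) + a.2.2 * u (i + 2)

/-- The product of two polynomials of degree at most two, reduced modulo `X ^ 3 - X ^ 2 - X - c`
and modulo `q`. -/
def shiftMul (q c : ℕ) : ℕ × ℕ × ℕ → ℕ × ℕ × ℕ → ℕ × ℕ × ℕ
  | (a₀, a₁, a₂), (b₀, b₁, b₂) =>
    force (a₁ * b₂ + a₂ * b₁ + a₂ * b₂) fun d =>
    force ((a₀ * b₀ + c * d) % q) fun c₀ =>
    force ((a₀ * b₁ + a₁ * b₀ + d + c * (a₂ * b₂)) % q) fun c₁ =>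
    force ((a₀ * b₂ + a₁ * b₁ + a₂ * b₀ + d + a₂ * b₂) % q) fun c₂ => (c₀, c₁, c₂)

theorem IsShift.mul {q c : ℕ} {u : ℕ → ZMod q} (hu : IsTribLike c u) {e f : ℕ}
    {a b : ℕ × ℕ × ℕ} (ha : IsShift u e a) (hb : IsShift u f b) :
    IsShift u (e + f) (shiftMul q c a b) := by
  intro i
  obtain ⟨a₀, a₁, a₂⟩ := a
  obtain ⟨b₀, b₁, b₂⟩ := b
  have h₃ := hu.add_three i
  have h₄ := hu.add_three (i + 1)
  simp only [add_assoc, add_comm 1, Nat.reduceAdd] at h₃ h₄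
  have hb₀ := hb i
  have hb₁ := hb (i + 1)
  have hb₂ := hb (i + 2)
  simp only [add_assoc, Nat.reduceAdd] at hb₀ hb₁ hb₂
  rw [add_assoc e, ha, add_assoc f i 1, add_assoc f i 2, hb₀, hb₁, hb₂, h₄, h₃]
  simp only [shiftMul, force_eq, ZMod.natCast_mod]
  push_cast
  ring

/-- The power `X ^ e` modulo `X ^ 3 - X ^ 2 - X - c` and `q`; the fuel `j` has to satisfy
`e < 2 ^ j`. -/
def shiftPow (q c : ℕ) : ℕ → ℕ → ℕ × ℕ × ℕ
  | 0, _ => (1, 0, 0)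
  | j + 1, e => force (e / 2) fun e' =>
    match shiftPow q c j e' with
    | (a₀, a₁, a₂) =>
      if e % 2 = 0 then shiftMul q c (a₀, a₁, a₂) (a₀, a₁, a₂)
      else shiftMul q c (0, 1, 0) (shiftMul q c (a₀, a₁, a₂) (a₀, a₁, a₂))

theorem IsTribLike.isShift_shiftPow {q c : ℕ} {u : ℕ → ZMod q} (hu : IsTribLike c u) {j e : ℕ}
    (he : e < 2 ^ j) : IsShift u e (shiftPow q c j e) := by
  induction j generalizing e with
  | zero =>
    obtain rfl : e = 0 := by simpa using he
    intro i
    simp [shiftPow]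
  | succ j ih =>
    have hhalf := ih (e := e / 2) (by rw [pow_succ] at he; lia)
    have hsq := hhalf.mul hu hhalf
    rw [shiftPow, force_eq]
    split_ifs with hpar
    · convert hsq using 1
      lia
    · have hone : IsShift u 1 (0, 1, 0) := fun i => by simp [add_comm 1]
      convert hone.mul hu hsq using 1
      lia

/-- A representative modulo `q` of the `e`-th term of the sequence with parameter `c`. -/
def residue (q c e : ℕ) : ℕ :=
  match shiftPow q c (e.log2 + 1) e with
  | (_, a₁, a₂) => a₁ + a₂

theorem IsTribLike.natCast_residue {q c : ℕ} {u : ℕ → ZMod q} (hu : IsTribLike c u) (e : ℕ) :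
    (residue q c e : ZMod q) = u e := by
  have h := hu.isShift_shiftPow (Nat.lt_log2_self (n := e)) 0
  simp only [add_zero, zero_add, hu.zero, hu.one, hu.two, mul_zero, mul_one] at h
  simp [residue, h]

/-- A test for `k` being a period modulo `q` of the sequence with parameter `c`. -/
def isPeriod (q c k : ℕ) : Bool :=
  residue q c k % q == 0 && residue q c (k + 1) % q == 1 % q && residue q c (k + 2) % q == 1 % q

theorem IsTribLike.periodic_of_isPeriod {q c k : ℕ} {u : ℕ → ZMod q} (hu : IsTribLike c u)
    (hk : isPeriod q c k) : Function.Periodic u k := by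
  simp only [isPeriod, Bool.and_eq_true, beq_iff_eq] at hk
  obtain ⟨⟨h₀, h₁⟩, h₂⟩ := hk
  suffices h : ∀ i, u (i + k) = u i ∧ u (i + 1 + k) = u (i + 1) ∧ u (i + 2 + k) = u (i + 2) from
    fun i => (h i).1
  intro i
  induction i with
  | zero =>
    refine ⟨?_, ?_, ?_⟩
    · simpa [hu.zero, hu.natCast_residue] using congrArg (Nat.cast (R := ZMod q)) h₀
    · simpa [hu.one, hu.natCast_residue, add_comm k] using congrArg (Nat.cast (R := ZMod q)) h₁
    · simpa [hu.two, hu.natCast_residue, add_comm k] using congrArg (Nat.cast (R := ZMod q)) h₂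
  | succ i ih =>
    obtain ⟨ih₀, ih₁, ih₂⟩ := ih
    refine ⟨ih₁, ih₂, ?_⟩
    have hshift := hu.add_three (i + k)
    have hi := hu.add_three i
    simp only [show i + k + 3 = i + 1 + 2 + k by ring, show i + k + 2 = i + 2 + k by ring,
      show i + k + 1 = i + 1 + k by ring] at hshift
    rw [hshift, ih₀, ih₁, ih₂, ← hi]

/-- The pairs of residues in `s.2` modulo `s.1` account for all solutions `(n, m)`. -/
def Covers (s : ℕ × List (ℕ × ℕ)) : Prop :=
  ∀ n m : ℕ, (Nat.fib n : ℤ) + 5 = trib m → (n % s.1, m % s.1) ∈ s.2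

/-- One step of the sieve: pass from residues modulo `k` to residues modulo `k * p`, keeping those
which are compatible with `F n + 5 = T m` modulo `q`, provided both sequences have period `k * p`
modulo `q`. -/
def sieveStep : ℕ × List (ℕ × ℕ) → ℕ × ℕ → ℕ × List (ℕ × ℕ)
  | (k, classes), (p, q) =>
    force (k * p) fun k' =>
    if isPeriod q 0 k' && isPeriod q 1 k' then
      (k', classes.flatMap fun (n, m) =>
        (List.range p).flatMap fun i =>
          force (n + k * i) fun n' => force ((residue q 0 n' + 5) % q) fun v =>
          (List.range p).flatMap fun j =>
            force (m + k * j) fun m' => if v = residue q 1 m' % q then [(n', m')] else [])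
    else (k, classes)

theorem Covers.step {s : ℕ × List (ℕ × ℕ)} {t : ℕ × ℕ} (hs : Covers s) (ht : 0 < t.1) :
    Covers (sieveStep s t) := by
  obtain ⟨k, classes⟩ := s
  obtain ⟨p, q⟩ := t
  rw [sieveStep, force_eq]
  split_ifs with hper
  · rw [Bool.and_eq_true] at hper
    intro n m hnm
    simp only [force_eq, List.mem_flatMap, List.mem_range]
    have hfib := (isTribLike_fib q).periodic_of_isPeriod hper.1
    have htrib := (isTribLike_trib q).periodic_of_isPeriod hper.2
    refine ⟨_, hs n m hnm, n / k % p, Nat.mod_lt _ ht, m / k % p, Nat.mod_lt _ ht, ?_⟩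
    simp only [← Nat.mod_mul]
    rw [if_pos]
    · exact List.mem_singleton_self _
    · apply (ZMod.natCast_eq_natCast_iff' _ _ q).1
      push_cast
      rw [(isTribLike_fib q).natCast_residue, (isTribLike_trib q).natCast_residue,
        hfib.map_mod_nat, htrib.map_mod_nat, ← hnm]
      push_cast
      rfl
  · exact hs

theorem Covers.foldl {l : List (ℕ × ℕ)} (hl : ∀ t ∈ l, 0 < t.1) {s : ℕ × List (ℕ × ℕ)}
    (hs : Covers s) : Covers (l.foldl sieveStep s) := by
  induction l generalizing s with
  | nil => exact hs
  | cons t l ih =>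
    exact ih (fun t' h => hl t' (List.mem_cons_of_mem t h)) (hs.step (hl t List.mem_cons_self))

/-- The steps `(p, q)` of the sieve. Each `q` is a modulus for which the periods of both sequences
divide the product of the `p` up to that step. -/
def sieveSteps : List (ℕ × ℕ) :=
  [(2, 1), (2, 1), (3, 2), (2, 4), (2, 56), (7, 637), (5, 1189), (11, 2185733), (3, 3746971),
    (3, 824149), (2, 12925712), (3, 1621), (3, 20006576371), (3, 104758314769), (5, 401),
    (2, 45619232), (2, 286784), (2, 39502207), (2, 3024027904), (2, 1297613312),
    (2, 5562243440087041), (2, 1121143726081), (3, 4629918322261), (3, 328051),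
    (3, 8727809481630721), (3, 8266861), (5, 7001), (2, 462422087680001), (2, 67584001),
    (2, 55738369), (2, 620085968896001), (5, 11251), (2, 5315022296186881), (2, 302776321),
    (2, 2645700318855169), (5, 206251), (5, 437501), (5, 53393571562501),
    (5, 461425825781251), (5, 601562501)]

/-- The modulus of the congruences on the indices delivered by the sieve. -/
def sieveModulus : ℕ := 2327947776000000000

/-- The solutions of `F n + 5 = T m` in integers when both sequences are continued to negative
indices by their recurrences. -/
def integerSolutions : List (ℤ × ℤ) :=
  [(-7, -13), (-6, -6), (-4, -5), (-4, 3), (-3, -11), (-3, 5), (-2, -8), (-2, 4), (0, -10),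
    (3, -11), (3, 5), (6, 6), (7, -13), (12, 10)]

theorem foldl_sieveStep_sieveSteps :
    (sieveSteps.foldl sieveStep (1, [(0, 0)])).1 = 2 * sieveModulus ∧
      ∀ c ∈ (sieveSteps.foldl sieveStep (1, [(0, 0)])).2, ∃ s ∈ integerSolutions,
        (sieveModulus : ℤ) ∣ c.1 - s.1 ∧ (sieveModulus : ℤ) ∣ c.2 - s.2 := by
  decide +kernel

theorem exists_integerSolution_dvd_sub {n m : ℕ} (h : (Nat.fib n : ℤ) + 5 = trib m) :
    ∃ s ∈ integerSolutions, (sieveModulus : ℤ) ∣ n - s.1 ∧ (sieveModulus : ℤ) ∣ m - s.2 := by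
  obtain ⟨hmod, hclasses⟩ := foldl_sieveStep_sieveSteps
  have hstart : Covers (1, [(0, 0)]) := fun n m _ => by simp [Nat.mod_one]
  have hcov := hstart.foldl (l := sieveSteps) (by decide) n m h
  rw [hmod] at hcov
  obtain ⟨s, hs, hn, hm⟩ := hclasses _ hcov
  have hdvd (x : ℕ) : (sieveModulus : ℤ) ∣ (x : ℤ) - (x % (2 * sieveModulus) : ℕ) := by
    push_cast
    exact (Dvd.intro_left 2 rfl).trans (Int.dvd_self_sub_emod)
  refine ⟨s, hs, ?_, ?_⟩
  · simpa using dvd_add (hdvd n) hn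
  · simpa using dvd_add (hdvd m) hm

end Sieve

theorem abs_le_of_mem_integerSolutions : ∀ s ∈ integerSolutions, |s.1| ≤ 12 ∧ |s.2| ≤ 13 := by
  decide

/-- The only representations of `-5` as `F n - T m` with `n, m ≥ 2` are
`(n, m) ∈ {(3,5), (6,6), (12,10)}`. -/
theorem fib_sub_trib_eq_neg_five :
    {p : ℕ × ℕ | 2 ≤ p.1 ∧ 2 ≤ p.2 ∧ (Nat.fib p.1 : ℤ) - trib p.2 = -5} =
      ({(3, 5), (6, 6), (12, 10)} : Set (ℕ × ℕ)) := by
  ext ⟨n, m⟩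
  simp only [Set.mem_ofPred_eq, Set.mem_insert_iff, Set.mem_singleton_iff, Prod.mk.injEq]
  constructor
  · rintro ⟨hn, hm, h⟩
    have hsol : (Nat.fib n : ℤ) + 5 = trib m := by linarith
    obtain ⟨⟨n₀, m₀⟩, hs, hdvdn, hdvdm⟩ := exists_integerSolution_dvd_sub hsol
    obtain ⟨hn₀, hm₀⟩ := abs_le_of_mem_integerSolutions _ hs
    obtain ⟨rfl, rfl⟩ := eq_of_fib_add_five_eq_trib hsol hn₀ hm₀ (by norm_num [sieveModulus])
      (by norm_num [sieveModulus]) hdvdn hdvdm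
    simp only [integerSolutions, List.mem_cons, Prod.mk.injEq, List.not_mem_nil, or_false] at hs
    omega
  · rintro (⟨rfl, rfl⟩ | ⟨rfl, rfl⟩ | ⟨rfl, rfl⟩) <;> decide
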